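/- Let X be a nonempty metric space and Y ⊆ X a nonempty porous subset, equipped with the induced metric. Suppose that the conformal dimensions of Y and of X are equal, finite, and positive. Then the conformal dimension of X is not attained: there is no Ahlfors Q-regular metric space W with Q = Confdim X admitting a quasisymmetric homeomorphism from X onto W. -/

import Mathlib

open scoped NNReal

universe u

/-- A subset `Y` of a metric space `X` is porous. -/
def Porous {X : Type*} [MetricSpace X] (Y : Set X) : Prop :=
  ∃ c : ℝ, 0 < c ∧ ∀ y ∈ Y, ∀ r : ℝ, 0 < r →
    ENNReal.ofReal r ≤ EMetric.diam (Set.univ : Set X) →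
    ∃ x : X, Metric.ball x (c * r) ⊆ Metric.ball y r \ Y

/-- `f` is `η`-quasisymmetric, the control `η` being a self-homeomorphism of `[0,∞)`. -/
def IsQuasisymmetricWith {X X' : Type*} [MetricSpace X] [MetricSpace X']
    (η : ℝ≥0 ≃ₜ ℝ≥0) (f : X → X') : Prop :=
  ∀ x y z : X, ∀ t : ℝ≥0, nndist x y ≤ t * nndist x z →
    nndist (f x) (f y) ≤ η t * nndist (f x) (f z)

/-- `f` is quasisymmetric if it is `η`-quasisymmetric for some homeomorphism `η` of `[0,∞)`. -/
def IsQuasisymmetric {X X' : Type*} [MetricSpace X] [MetricSpace X'] (f : X → X') : Prop :=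
  ∃ η : ℝ≥0 ≃ₜ ℝ≥0, IsQuasisymmetricWith η f

/-- A metric space `W` is Ahlfors `Q`-regular: it is complete and carries a Borel measure `μ`
with `C⁻¹ r^Q ≤ μ(B(w,r)) ≤ C r^Q` for all `w` and `0 < r ≤ diam W`. -/
def AhlforsRegular (W : Type u) [MetricSpace W] (Q : ℝ) : Prop :=
  CompleteSpace W ∧
    ∃ (_ : MeasurableSpace W) (_ : BorelSpace W) (μ : MeasureTheory.Measure W) (C : ℝ),
      1 ≤ C ∧ ∀ w : W, ∀ r : ℝ, 0 < r →
        ENNReal.ofReal r ≤ EMetric.diam (Set.univ : Set W) →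
        ENNReal.ofReal (C⁻¹ * r ^ Q) ≤ μ (Metric.ball w r) ∧
          μ (Metric.ball w r) ≤ ENNReal.ofReal (C * r ^ Q)

/-- The set of exponents `Q ≥ 0` such that `Z` is quasisymmetric to some Ahlfors
`Q`-regular metric space. -/
def confdimSet (Z : Type u) [MetricSpace Z] : Set ℝ :=
  {Q : ℝ | 0 ≤ Q ∧ ∃ (W : Type u) (_ : MetricSpace W) (f : Z ≃ₜ W),
    AhlforsRegular W Q ∧ IsQuasisymmetric (f : Z → W)}

/-- The (Ahlfors regular) conformal dimension of `Z`. -/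
noncomputable def confdim (Z : Type u) [MetricSpace Z] : ℝ :=
  sInf (confdimSet Z)

/-!
Let `f` be a quasisymmetric map of `X` onto an Ahlfors `Q`-regular space `W`. Porosity passes to
`Z = f(Y)`, which therefore misses a fixed proportion of the volume of the layer around it at every
scale. Over the many layers between the scales `R / L` and `R` these losses add up: for some
`β < Q` an `R / L`-separated subset of an `R`-ball of `Z` has at most `L ^ β` points. Distributing
mass along a tree of nets (Vol'berg–Konyagin) and passing to a vague limit, one obtains a
`β`-homogeneous measure `μ` on `Z`. Since `Y` has positive conformal dimension, `Z` is uniformly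
perfect, so that the metric of `Z` can be deformed quasisymmetrically to one comparable with
`μ (B(x, d(x, y))) ^ (1 / β)` (David–Semmes). The deformed space is Ahlfors `β`-regular, so the
conformal dimension of `Y` is at most `β < Q`.
-/

open MeasureTheory Set Filter Topology

/-! ### Quasisymmetric maps -/

section Quasisymmetry

variable {A B C : Type*} [MetricSpace A] [MetricSpace B] [MetricSpace C] {f : A → B}

/-- `f` carries a ratio of distances from a common point that is at most `T` to a ratio that is at
most `H`. -/
def RatioBound (f : A → B) (T H : ℝ) : Prop :=
  ∀ x y z : A, dist x y ≤ T * dist x z → dist (f x) (f y) ≤ H * dist (f x) (f z)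

/-- Quasisymmetry without reference to a control homeomorphism: small ratios of distances are
carried to small ratios, and bounded ratios to bounded ratios. -/
structure ControlsRatios (f : A → B) : Prop where
  small : ∀ ε > 0, ∃ δ > 0, RatioBound f δ ε
  bounded : ∀ T > 0, ∃ H > 0, RatioBound f T H

lemma homeomorph_apply_zero (η : ℝ≥0 ≃ₜ ℝ≥0) : η 0 = 0 := by
  rcases η.continuous.strictMono_of_inj η.injective with hη | hη
  · obtain ⟨t, ht⟩ := η.surjective 0
    have h : η 0 ≤ η t := hη.monotone zero_le
    exact le_antisymm (ht ▸ h) zero_le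
  · obtain ⟨t, ht⟩ := η.surjective (η 0 + 1)
    have h : η t ≤ η 0 := hη.antitone zero_le
    exact absurd (ht ▸ h) (lt_add_one _).not_ge

lemma IsQuasisymmetricWith.ratioBound {η : ℝ≥0 ≃ₜ ℝ≥0} (hf : IsQuasisymmetricWith η f) (t : ℝ≥0) :
    RatioBound f t (η t) := fun x y z hxy => by
  exact_mod_cast hf x y z t (by exact_mod_cast hxy)

lemma RatioBound.mono {S T H K : ℝ} (hf : RatioBound f T H) (hST : S ≤ T) (hHK : H ≤ K) :
    RatioBound f S K := fun x y z hxy =>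
  (hf x y z (hxy.trans (by gcongr))).trans (by gcongr)

lemma RatioBound.comp {g : B → C} {S T H : ℝ} (hg : RatioBound g T H) (hf : RatioBound f S T) :
    RatioBound (g ∘ f) S H := fun x y z hxy => hg _ _ _ (hf x y z hxy)

lemma RatioBound.symm {e : A ≃ B} {T H K : ℝ} (he : RatioBound e T H) (hT : 0 < T)
    (hHK : H * K < 1) : RatioBound e.symm K T⁻¹ := by
  intro x y z hxy
  obtain ⟨x, rfl⟩ := e.surjective x
  obtain ⟨y, rfl⟩ := e.surjective y
  obtain ⟨z, rfl⟩ := e.surjective z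
  simp only [Equiv.symm_apply_apply]
  by_contra! hlt
  have hzy : dist (e x) (e z) ≤ H * dist (e x) (e y) :=
    he x z y ((inv_mul_le_iff₀ hT).1 hlt.le)
  have hy : 0 < dist (e x) (e y) := by
    refine dist_pos.2 (e.injective.ne fun hxy' => ?_)
    rw [hxy', dist_self] at hlt
    exact hlt.not_ge (by positivity)
  have hz : 0 < dist (e x) (e z) := by
    by_contra! h
    rw [le_antisymm h dist_nonneg, mul_zero] at hxy
    exact hy.not_ge hxy
  have hH : 0 < H := pos_of_mul_pos_left (hz.trans_le hzy) hy.le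
  have : dist (e x) (e z) ≤ H * K * dist (e x) (e z) := by
    calc dist (e x) (e z) ≤ H * dist (e x) (e y) := hzy
      _ ≤ H * (K * dist (e x) (e z)) := by gcongr
      _ = H * K * dist (e x) (e z) := by ring
  nlinarith

lemma IsQuasisymmetric.controlsRatios (hf : IsQuasisymmetric f) : ControlsRatios f := by
  obtain ⟨η, hη⟩ := hf
  refine ⟨fun ε hε => ?_, fun T hT => ?_⟩
  · lift ε to ℝ≥0 using hε.le
    have hne : η.symm ε ≠ 0 := fun h0 => by
      rw [← η.apply_symm_apply ε, h0, homeomorph_apply_zero] at hε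
      exact lt_irrefl _ hε
    refine ⟨η.symm ε, by exact_mod_cast pos_iff_ne_zero.2 hne, ?_⟩
    simpa using hη.ratioBound (η.symm ε)
  · lift T to ℝ≥0 using hT.le
    exact ⟨η T + 1, by positivity, (hη.ratioBound T).mono le_rfl (by simp)⟩

lemma IsQuasisymmetric.comp {g : B → C} (hg : IsQuasisymmetric g) (hf : IsQuasisymmetric f) :
    IsQuasisymmetric (g ∘ f) := by
  obtain ⟨η, hη⟩ := hg
  obtain ⟨θ, hθ⟩ := hf
  exact ⟨θ.trans η, fun x y z t hxy => hη _ _ _ _ (hθ x y z t hxy)⟩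

namespace ControlsRatios

lemma comp {g : B → C} (hg : ControlsRatios g) (hf : ControlsRatios f) :
    ControlsRatios (g ∘ f) where
  small ε hε := by
    obtain ⟨δ, hδ, hgδ⟩ := hg.small ε hε
    obtain ⟨γ, hγ, hfγ⟩ := hf.small δ hδ
    exact ⟨γ, hγ, hgδ.comp hfγ⟩
  bounded T hT := by
    obtain ⟨H, hH, hfH⟩ := hf.bounded T hT
    obtain ⟨K, hK, hgK⟩ := hg.bounded H hH
    exact ⟨K, hK, hgK.comp hfH⟩

lemma symm {e : A ≃ B} (he : ControlsRatios e) : ControlsRatios e.symm where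
  small ε hε := by
    obtain ⟨H, hH, heH⟩ := he.bounded ε⁻¹ (inv_pos.2 hε)
    refine ⟨(2 * H)⁻¹, by positivity, ?_⟩
    simpa using heH.symm (K := (2 * H)⁻¹) (inv_pos.2 hε) (by field_simp; norm_num)
  bounded T hT := by
    obtain ⟨δ, hδ, heδ⟩ := he.small (2 * T)⁻¹ (by positivity)
    exact ⟨δ⁻¹, inv_pos.2 hδ, heδ.symm hδ (by field_simp; norm_num)⟩

lemma continuous [Nontrivial A] (hf : ControlsRatios f) : Continuous f := by
  refine Metric.continuous_iff.2 fun x ε hε => ?_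
  obtain ⟨z, hz⟩ := exists_ne x
  have hxz : 0 < dist x z := dist_pos.2 hz.symm
  obtain ⟨δ, hδ, hfδ⟩ := hf.small (ε / (dist (f x) (f z) + 1)) (by positivity)
  refine ⟨δ * dist x z, by positivity, fun y hy => ?_⟩
  rw [dist_comm] at hy ⊢
  calc dist (f x) (f y) ≤ ε / (dist (f x) (f z) + 1) * dist (f x) (f z) := hfδ x y z hy.le
    _ < ε / (dist (f x) (f z) + 1) * (dist (f x) (f z) + 1) := by gcongr; exact lt_add_one _
    _ = ε := by field_simp

end ControlsRatios

lemma exists_eventually_le_dist_of_cauchySeq [Nontrivial A] {u : ℕ → A} (hu : CauchySeq u) :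
    ∃ p, ∃ s > 0, ∀ᶠ n in atTop, s ≤ dist (u n) p := by
  obtain ⟨a, b, hab⟩ := exists_pair_ne A
  have hs : 0 < dist a b / 4 := by have := dist_pos.2 hab; positivity
  obtain ⟨N, hN⟩ := Metric.cauchySeq_iff.1 hu _ hs
  rcases le_or_gt (dist a b / 2) (dist (u N) a) with ha | ha
  · refine ⟨a, _, hs, eventually_atTop.2 ⟨N, fun n hn => ?_⟩⟩
    linarith [dist_triangle (u N) (u n) a, hN N le_rfl n hn]
  · refine ⟨b, _, hs, eventually_atTop.2 ⟨N, fun n hn => ?_⟩⟩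
    linarith [dist_triangle (u N) (u n) b, hN N le_rfl n hn, dist_triangle_left a b (u N)]

lemma ControlsRatios.cauchySeq [Nontrivial A] (hf : ControlsRatios f) {u : ℕ → A}
    (hu : CauchySeq u) : CauchySeq (f ∘ u) := by
  obtain ⟨p, s, hs, hp⟩ := exists_eventually_le_dist_of_cauchySeq hu
  obtain ⟨N, hN⟩ := eventually_atTop.1 hp
  obtain ⟨D, hD, hfD⟩ : ∃ D > 0, ∀ n, dist (f (u n)) (f p) ≤ D := by
    obtain ⟨M, hM0, hM⟩ := cauchySeq_bdd hu
    obtain ⟨H, hH, hfH⟩ := hf.bounded ((M + dist (u N) p) / s) (by positivity)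
    refine ⟨H * dist (f p) (f (u N)) + 1, by positivity, fun n => ?_⟩
    have hpn : dist p (u n) ≤ (M + dist (u N) p) / s * dist p (u N) := by
      calc dist p (u n) ≤ M + dist (u N) p := by
            linarith [dist_triangle_right p (u n) (u N), hM n N, dist_comm p (u N)]
        _ = (M + dist (u N) p) / s * s := by field_simp
        _ ≤ (M + dist (u N) p) / s * dist p (u N) := by
            gcongr; rw [dist_comm]; exact hN N le_rfl
    linarith [hfH p (u n) (u N) hpn, dist_comm (f p) (f (u n))]
  refine Metric.cauchySeq_iff.2 fun ε hε => ?_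
  obtain ⟨δ, hδ, hfδ⟩ := hf.small (ε / (2 * D)) (by positivity)
  obtain ⟨N', hN'⟩ := Metric.cauchySeq_iff.1 hu (δ * s) (by positivity)
  refine ⟨max N N', fun m hm n hn => ?_⟩
  have hmn : dist (u m) (u n) ≤ δ * dist (u m) p :=
    (hN' m (le_of_max_le_right hm) n (le_of_max_le_right hn)).le.trans <| by
      gcongr; exact hN m (le_of_max_le_left hm)
  calc dist (f (u m)) (f (u n)) ≤ ε / (2 * D) * dist (f (u m)) (f p) := hfδ _ _ _ hmn
    _ ≤ ε / (2 * D) * D := by gcongr; exact hfD m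
    _ = ε / 2 := by field_simp
    _ < ε := half_lt_self hε

lemma ControlsRatios.completeSpace [Nontrivial A] [CompleteSpace A] {e : A ≃ B}
    (he : ControlsRatios e) : CompleteSpace B := by
  have : Nontrivial B := e.symm.nontrivial
  refine Metric.complete_of_cauchySeq_tendsto fun u hu => ?_
  obtain ⟨a, ha⟩ := cauchySeq_tendsto_of_complete (he.symm.cauchySeq hu)
  refine ⟨e a, ?_⟩
  simpa [Function.comp_def] using (he.continuous.tendsto a).comp ha

end Quasisymmetry

/-! ### Uniform perfectness and porosity -/

section UniformlyPerfect

variable {A B : Type*} [MetricSpace A] [MetricSpace B]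

/-- Uniform perfectness: around every point, the annuli of a fixed modulus whose size does not
exceed the distance to some other point are nonempty. -/
def UniformlyPerfect (A : Type*) [MetricSpace A] : Prop :=
  ∃ c > 0, ∀ x z : A, ∀ R : ℝ, 0 < R → R ≤ dist x z → ∃ y : A, c * R ≤ dist x y ∧ dist x y ≤ R / 2

lemma UniformlyPerfect.of_forall_ne {c : ℝ} (hc : 0 < c)
    (h : ∀ x z : A, x ≠ z → ∃ y, c * dist x z ≤ dist x y ∧ dist x y ≤ dist x z / 2) :
    UniformlyPerfect A := by
  refine ⟨c / 2, half_pos hc, fun x z R hR hRz => ?_⟩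
  let S : Set ℝ := {d | R / 2 < d ∧ ∃ y, dist x y = d}
  have hS : S.Nonempty := ⟨dist x z, by linarith, z, rfl⟩
  have hbdd : BddBelow S := ⟨R / 2, fun d hd => hd.1.le⟩
  have hinf : 0 < sInf S := by linarith [le_csInf hS fun d (hd : d ∈ S) => hd.1.le]
  obtain ⟨_, ⟨hRy, y, rfl⟩, hy⟩ := exists_lt_of_csInf_lt hS (show sInf S < 2 * sInf S by linarith)
  obtain ⟨w, hyw, hwy⟩ := h x y (dist_pos.1 (by linarith))
  refine ⟨w, by nlinarith, ?_⟩
  by_contra! hw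
  linarith [csInf_le hbdd (show dist x w ∈ S from ⟨hw, w, rfl⟩)]

lemma UniformlyPerfect.of_controlsRatios (hA : UniformlyPerfect A) {e : A ≃ B}
    (he : ControlsRatios e) : UniformlyPerfect B := by
  obtain ⟨c, hc, hA⟩ := hA
  obtain ⟨δ, hδ, heδ⟩ := he.small (1 / 2) (by norm_num)
  obtain ⟨H, hH, heH⟩ := he.bounded (c * min δ 1)⁻¹ (by positivity)
  refine .of_forall_ne (inv_pos.2 hH) fun x z hxz => ?_
  obtain ⟨x, rfl⟩ := e.surjective x
  obtain ⟨z, rfl⟩ := e.surjective z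
  have hdist : 0 < dist x z := dist_pos.2 (ne_of_apply_ne e hxz)
  obtain ⟨y, hy, hy'⟩ := hA x z (min δ 1 * dist x z) (by positivity)
    (mul_le_of_le_one_left hdist.le (min_le_right _ _))
  refine ⟨e y, (inv_mul_le_iff₀ hH).2 (heH x z y ?_), ?_⟩
  · rwa [le_inv_mul_iff₀ (by positivity), mul_assoc]
  · refine (heδ x y z ?_).trans_eq (by ring)
    nlinarith [min_le_left δ 1]

lemma ofReal_le_ediam_univ {x z : A} {r : ℝ} (h : r ≤ dist x z) :
    ENNReal.ofReal r ≤ Metric.ediam (univ : Set A) := by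
  refine le_trans ?_ (Metric.edist_le_ediam_of_mem (mem_univ x) (mem_univ z))
  rw [edist_dist]
  exact ENNReal.ofReal_le_ofReal h

lemma AhlforsRegular.uniformlyPerfect {W : Type*} [MetricSpace W] {S : ℝ} (hS : 0 < S)
    (hW : AhlforsRegular W S) : UniformlyPerfect W := by
  obtain ⟨-, _, -, μ, C, hC, hμ⟩ := hW
  let b := (C⁻¹ * C⁻¹ / 2) ^ S⁻¹
  have hb : b ≤ 1 := by
    have hC' : C⁻¹ ≤ 1 := inv_le_one_of_one_le₀ hC
    have hC0 : 0 ≤ C⁻¹ := by positivity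
    exact Real.rpow_le_one (by positivity) (by nlinarith) (by positivity)
  have hbS : b ^ S = C⁻¹ * C⁻¹ / 2 := Real.rpow_inv_rpow (by positivity) hS.ne'
  refine ⟨b / 2, by positivity, fun x z R hR hRz => ?_⟩
  have hlt : μ (Metric.ball x (b * (R / 2))) < μ (Metric.ball x (R / 2)) := by
    refine lt_of_le_of_lt (hμ x (b * (R / 2)) (by positivity)
      (ofReal_le_ediam_univ (x := x) (z := z) ?_)).2 (lt_of_lt_of_le ?_
        (hμ x (R / 2) (by positivity) (ofReal_le_ediam_univ (x := x) (z := z) (by linarith))).1)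
    · nlinarith
    · rw [ENNReal.ofReal_lt_ofReal_iff (by positivity),
        Real.mul_rpow (by positivity) (by positivity), hbS]
      calc C * (C⁻¹ * C⁻¹ / 2 * (R / 2) ^ S) = C⁻¹ * (R / 2) ^ S / 2 := by field_simp
        _ < C⁻¹ * (R / 2) ^ S := half_lt_self (by positivity)
  obtain ⟨y, hy, hy'⟩ := not_subset.1 fun hsub => hlt.not_ge (measure_mono hsub)
  rw [Metric.mem_ball, dist_comm] at hy hy'
  exact ⟨y, by linarith [not_lt.1 hy'], hy.le⟩

/-- Porosity at the scales not exceeding the diameter of the set itself, with holes measured by the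
distance to the set. -/
def RelativelyPorous (Z : Set A) : Prop :=
  ∃ c > 0, ∀ y ∈ Z, ∀ z ∈ Z, ∀ r : ℝ, 0 < r → r ≤ dist y z →
    ∃ w, dist w y < r ∧ ∀ v ∈ Z, c * r ≤ dist w v

lemma Porous.relativelyPorous {Y : Set A} (hY : Porous Y) : RelativelyPorous Y := by
  obtain ⟨c, hc, hY⟩ := hY
  refine ⟨c, hc, fun y hy z _ r hr hrz => ?_⟩
  obtain ⟨w, hw⟩ := hY y hy r hr (ofReal_le_ediam_univ hrz)
  refine ⟨w, (hw (Metric.mem_ball_self (by positivity))).1, fun v hv => ?_⟩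
  by_contra! hlt
  exact (hw (Metric.mem_ball'.2 hlt)).2 hv

lemma RelativelyPorous.image {Y : Set A} (hY : RelativelyPorous Y) {e : A ≃ B}
    (he : ControlsRatios e) (hup : UniformlyPerfect (e '' Y)) : RelativelyPorous (e '' Y) := by
  obtain ⟨p, hp, hY⟩ := hY
  obtain ⟨c, hc, hup⟩ := hup
  obtain ⟨δ', hδ', heδ'⟩ := he.small (1 / 2) (by norm_num)
  obtain ⟨δ, hδ, hδ1, heδ⟩ : ∃ δ > 0, δ ≤ 1 ∧ RatioBound e δ (1 / 2) :=
    ⟨min δ' 1, by positivity, min_le_right _ _, heδ'.mono (min_le_left _ _) le_rfl⟩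
  obtain ⟨H, hH, heH⟩ := he.bounded ((1 + δ⁻¹) / p) (by positivity)
  refine ⟨c / (2 * H), by positivity, fun y hy z hz r hr hrz => ?_⟩
  obtain ⟨⟨_, x', hx', rfl⟩, hcr, hr2⟩ := hup ⟨y, hy⟩ ⟨z, hz⟩ r hr hrz
  obtain ⟨x, hx, rfl⟩ := hy
  simp only [Subtype.dist_eq] at hcr hr2
  have hxx' : 0 < dist x x' := dist_pos.2 <| ne_of_apply_ne e <| dist_pos.1 <|
    (mul_pos hc hr).trans_le hcr
  obtain ⟨q, hqx, hq⟩ := hY x hx x' hx' (δ * dist x x') (by positivity) (by nlinarith)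
  have heq : dist (e x) (e q) ≤ 1 / 2 * dist (e x) (e x') :=
    heδ x q x' (by rw [dist_comm]; exact hqx.le)
  refine ⟨e q, by rw [dist_comm]; linarith, ?_⟩
  rintro _ ⟨v, hv, rfl⟩
  have hqx' : dist q x' ≤ (1 + δ⁻¹) / p * dist q v := by
    calc dist q x' ≤ δ * dist x x' + dist x x' := by linarith [dist_triangle q x x']
      _ = (1 + δ⁻¹) / p * (p * (δ * dist x x')) := by field_simp
      _ ≤ (1 + δ⁻¹) / p * dist q v := by gcongr; exact hq v hv
  have hev : c * r / 2 ≤ H * dist (e q) (e v) := by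
    linarith [heH q x' v hqx', dist_triangle (e x) (e q) (e x')]
  calc c / (2 * H) * r = c * r / 2 / H := by field_simp
    _ ≤ dist (e q) (e v) := by rwa [div_le_iff₀' hH]

end UniformlyPerfect

/-! ### Counting separated points of a porous subset of a regular space -/

section Counting

variable {W : Type*} [MetricSpace W]

lemma exists_separated_net (S : Set W) {s : ℝ} (hs : 0 < s) :
    ∃ T ⊆ S, T.Pairwise (fun a b => s ≤ dist a b) ∧ ∀ x ∈ S, ∃ t ∈ T, dist x t < s := by
  let r : W → W → Prop := fun a b => s ≤ dist a b
  have : Std.Symm r := ⟨fun a b (h : s ≤ dist a b) => h.trans_eq (dist_comm a b)⟩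
  obtain ⟨T, hT⟩ := zorn_subset {T : Set W | T ⊆ S ∧ T.Pairwise r} fun c hc hchain =>
    ⟨⋃₀ c, ⟨sUnion_subset fun t ht => (hc ht).1,
      (pairwise_sUnion hchain.directedOn).2 fun t ht => (hc ht).2⟩,
      fun t ht => subset_sUnion_of_mem ht⟩
  refine ⟨T, hT.prop.1, hT.prop.2, fun x hx => ?_⟩
  by_contra! hfar
  have hmem : insert x T ∈ {T : Set W | T ⊆ S ∧ T.Pairwise r} :=
    ⟨insert_subset hx hT.prop.1, hT.prop.2.insert_of_symm fun b hb _ => hfar b hb⟩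
  have hxT : x ∈ T := hT.le_of_ge hmem (subset_insert x T) (mem_insert x T)
  exact (hfar x hxT).not_gt (by rwa [dist_self])

/-- The two-sided volume bounds of Ahlfors `Q`-regularity with constant `C`, for the balls of
radius at most `D`. -/
structure RegularUpTo [MeasurableSpace W] (μ : Measure W) (C Q D : ℝ) : Prop where
  const_pos : 0 < C
  ne_top : ∀ w r, 0 < r → r ≤ D → μ (Metric.ball w r) ≠ ⊤
  lower : ∀ w r, 0 < r → r ≤ D → C⁻¹ * r ^ Q ≤ μ.real (Metric.ball w r)
  upper : ∀ w r, 0 < r → r ≤ D → μ.real (Metric.ball w r) ≤ C * r ^ Q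

lemma AhlforsRegular.exists_regularUpTo {W : Type*} [MetricSpace W] {Q : ℝ}
    (hW : AhlforsRegular W Q) :
    ∃ (_ : MeasurableSpace W) (_ : BorelSpace W) (μ : Measure W) (C : ℝ), 0 < C ∧
      ∀ a b : W, RegularUpTo μ C Q (dist a b) := by
  obtain ⟨-, hm, hb, μ, C, hC, hμ⟩ := hW
  have hC0 : 0 < C := one_pos.trans_le hC
  have hfin : ∀ a b w : W, ∀ r : ℝ, 0 < r → r ≤ dist a b → μ (Metric.ball w r) ≠ ⊤ :=
    fun a b w r hr hrab =>
      ((hμ w r hr (ofReal_le_ediam_univ hrab)).2.trans_lt ENNReal.ofReal_lt_top).ne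
  refine ⟨hm, hb, μ, C, hC0, fun a b => ⟨hC0, hfin a b, fun w r hr hrab => ?_,
    fun w r hr hrab => ?_⟩⟩
  · exact (ENNReal.ofReal_le_iff_le_toReal (hfin a b w r hr hrab)).1
      (hμ w r hr (ofReal_le_ediam_univ hrab)).1
  · exact ENNReal.toReal_le_of_le_ofReal (by positivity)
      (hμ w r hr (ofReal_le_ediam_univ hrab)).2

namespace RegularUpTo

variable [MeasurableSpace W] {μ : Measure W} {C Q D : ℝ} {ι : Type*} {r : ℝ}

lemma card_mul_le_measureReal [OpensMeasurableSpace W] (hμ : RegularUpTo μ C Q D) {F : Finset ι}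
    {p : ι → W} (hp : (F : Set ι).Pairwise fun a b => 2 * r ≤ dist (p a) (p b)) (hr : 0 < r)
    (hrD : r ≤ D) {E : Set W} (hE : μ E ≠ ⊤) (hsub : ∀ a ∈ F, Metric.ball (p a) r ⊆ E) :
    F.card * (C⁻¹ * r ^ Q) ≤ μ.real E := by
  have hdisj : (F : Set ι).PairwiseDisjoint fun a => Metric.ball (p a) r :=
    fun a ha b hb hab => Metric.ball_disjoint_ball (by linarith [hp ha hb hab])
  calc F.card * (C⁻¹ * r ^ Q) = ∑ _a ∈ F, C⁻¹ * r ^ Q := by rw [Finset.sum_const, nsmul_eq_mul]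
    _ ≤ ∑ a ∈ F, μ.real (Metric.ball (p a) r) := Finset.sum_le_sum fun a _ => hμ.lower _ r hr hrD
    _ = μ.real (⋃ a ∈ F, Metric.ball (p a) r) :=
        (measureReal_biUnion_finset hdisj (fun _ _ => measurableSet_ball)
          fun a _ => hμ.ne_top _ r hr hrD).symm
    _ ≤ μ.real E := measureReal_mono (iUnion₂_subset hsub) hE

lemma measureReal_le_card_mul (hμ : RegularUpTo μ C Q D) (F : Finset ι) (p : ι → W) (hr : 0 < r)
    (hrD : r ≤ D) : μ.real (⋃ a ∈ F, Metric.ball (p a) r) ≤ F.card * (C * r ^ Q) := by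
  calc μ.real (⋃ a ∈ F, Metric.ball (p a) r) ≤ ∑ a ∈ F, μ.real (Metric.ball (p a) r) :=
        measureReal_biUnion_finset_le _ _
    _ ≤ ∑ _a ∈ F, C * r ^ Q := Finset.sum_le_sum fun a _ => hμ.upper _ r hr hrD
    _ = F.card * (C * r ^ Q) := by rw [Finset.sum_const, nsmul_eq_mul]

lemma card_mul_le_card_mul [OpensMeasurableSpace W] (hμ : RegularUpTo μ C Q D) {s t : ℝ}
    {F T : Finset ι} {p : ι → W} (hs : 0 < s) (hst : s ≤ t) (htD : 5 * t ≤ D)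
    (hF : (F : Set ι).Pairwise fun a b => s ≤ dist (p a) (p b))
    (hFT : ∀ a ∈ F, ∃ b ∈ T, dist (p a) (p b) < 4 * t) :
    F.card * (C⁻¹ * (s / 2) ^ Q) ≤ T.card * (C * (5 * t) ^ Q) := by
  refine (hμ.card_mul_le_measureReal (by simpa [mul_div_cancel₀] using hF) (half_pos hs)
    (by linarith) ?_ fun a ha => ?_).trans (hμ.measureReal_le_card_mul T p (by linarith) htD)
  · exact (measure_biUnion_lt_top T.finite_toSet fun a _ =>
      (hμ.ne_top _ _ (by linarith) htD).lt_top).ne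
  · obtain ⟨b, hb, hab⟩ := hFT a ha
    exact (Metric.ball_subset_ball' (by linarith)).trans
      (subset_biUnion_of_mem (u := fun b => Metric.ball (p b) (5 * t)) hb)

end RegularUpTo

/-- The points at distance comparable to `t` from `Z`, where the holes of size `c * t` of a
relatively porous set `Z` at scale `t` are found. -/
def holeLayer (Z : Set W) (c t : ℝ) : Set W :=
  {z | Metric.infDist z Z ∈ Ico (c * t / 2) (3 / 2 * t)}

lemma measurableSet_holeLayer [MeasurableSpace W] [OpensMeasurableSpace W] (Z : Set W) (c t : ℝ) :
    MeasurableSet (holeLayer Z c t) :=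
  (Metric.continuous_infDist_pt Z).measurable measurableSet_Ico

lemma disjoint_holeLayer {Z : Set W} {c t t' : ℝ} (h : 3 * t ≤ c * t') :
    Disjoint (holeLayer Z c t) (holeLayer Z c t') :=
  disjoint_left.2 fun z hz hz' => by linarith [hz.2, hz'.1]

lemma pairwise_disjoint_holeLayer (Z : Set W) {c s : ℝ} (hc : 0 < c) (hc1 : c ≤ 1) (hs : 0 ≤ s) :
    Pairwise (Function.onFun Disjoint fun j : ℕ => holeLayer Z c ((4 / c) ^ j * s)) := by
  have hK : 1 ≤ 4 / c := by rw [le_div_iff₀ hc]; linarith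
  refine (pairwise_disjoint_on _).2 fun i j hij => disjoint_holeLayer ?_
  calc 3 * ((4 / c) ^ i * s) ≤ 4 * ((4 / c) ^ i * s) := by gcongr; norm_num
    _ = c * ((4 / c) ^ (i + 1) * s) := by rw [pow_succ]; field_simp
    _ ≤ c * ((4 / c) ^ j * s) := by gcongr; exact hij

lemma ball_subset_holeLayer {Z : Set W} {c t : ℝ} {a w : W} (hct : c * t < t) (haZ : a ∈ Z)
    (hwa : dist w a < t) (hw : ∀ v ∈ Z, c * t ≤ dist w v) :
    Metric.ball w (c * t / 2) ⊆ holeLayer Z c t ∩ Metric.ball a (3 / 2 * t) := by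
  intro z hz
  rw [Metric.mem_ball] at hz
  have hza : dist z a < 3 / 2 * t := by linarith [dist_triangle z w a]
  refine ⟨⟨(Metric.le_infDist ⟨a, haZ⟩).2 fun v hv => ?_,
    (Metric.infDist_le_dist_of_mem haZ).trans_lt hza⟩, hza⟩
  linarith [hw v hv, dist_triangle_left w v z]

namespace RegularUpTo

variable [MeasurableSpace W] [OpensMeasurableSpace W] {μ : Measure W} {C Q D : ℝ} {Z : Set W}
  {c s t R : ℝ}

lemma card_mul_le_measureReal_holeLayer (hμ : RegularUpTo μ C Q D) (hc : 0 < c) (hc1 : c ≤ 1)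
    (ht : 0 < t) (htR : 2 * t ≤ R) (hRD : 8 * R ≤ D) (y : W) (T : Finset Z)
    (hTR : ∀ a ∈ T, dist (a : W) y ≤ R)
    (hT : (T : Set Z).Pairwise fun a b => 4 * t ≤ dist a b)
    (hholes : ∀ a ∈ T, ∃ w : W, dist w a < t ∧ ∀ v ∈ Z, c * t ≤ dist w v) :
    T.card * (C⁻¹ * (c * t / 2) ^ Q) ≤ μ.real (holeLayer Z c t ∩ Metric.ball y (3 * R)) := by
  have : Nonempty W := ⟨y⟩
  choose! w hwa hw using hholes
  have hct : c * t ≤ t := mul_le_of_le_one_left ht.le hc1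
  refine hμ.card_mul_le_measureReal (p := w) (fun a ha b hb hab => ?_) (by positivity)
    (by linarith) (measure_ne_top_of_subset inter_subset_right
      (hμ.ne_top y (3 * R) (by linarith) (by linarith))) fun a ha => ?_
  · have hdist : 4 * t ≤ dist (a : W) b := hT ha hb hab
    linarith [hwa a ha, hwa b hb, dist_comm (w a) a, dist_triangle4 (a : W) (w a) (w b) b]
  · have hcta : c * t < t := (hw a ha a a.2).trans_lt (hwa a ha)
    refine (ball_subset_holeLayer hcta a.2 (hwa a ha) (hw a ha)).trans ?_
    exact inter_subset_inter_right _ (Metric.ball_subset_ball' (by linarith [hTR a ha]))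

lemma card_mul_rpow_le_measureReal_holeLayer (hμ : RegularUpTo μ C Q D) (hc : 0 < c) (hc1 : c ≤ 1)
    (hs : 0 < s) (hst : s ≤ t) (htR : 2 * t ≤ R) (hRD : 8 * R ≤ D) (y : W) (F : Finset Z)
    (hFR : ∀ a ∈ F, dist (a : W) y ≤ R) (hF : (F : Set Z).Pairwise fun a b => s ≤ dist a b)
    (hholes : ∀ a ∈ F, ∃ w : W, dist w a < t ∧ ∀ v ∈ Z, c * t ≤ dist w v) :
    F.card * s ^ Q ≤
      C ^ 3 * (20 / c) ^ Q * μ.real (holeLayer Z c t ∩ Metric.ball y (3 * R)) := by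
  have ht : 0 < t := hs.trans_le hst
  have hC := hμ.const_pos
  obtain ⟨T, hTF, hT, hFT⟩ := exists_separated_net (F : Set Z) (show 0 < 4 * t by positivity)
  lift T to Finset Z using F.finite_toSet.subset hTF
  have hFT' : F.card * (C⁻¹ * (s / 2) ^ Q) ≤ T.card * (C * (5 * t) ^ Q) :=
    hμ.card_mul_le_card_mul (p := Subtype.val) hs hst (by linarith) hF hFT
  have hTE := hμ.card_mul_le_measureReal_holeLayer hc hc1 ht htR hRD y T
    (fun a ha => hFR a (hTF ha)) hT fun a ha => hholes a (hTF ha)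
  set E := holeLayer Z c t ∩ Metric.ball y (3 * R)
  have hs2 : s ^ Q = 2 ^ Q * (s / 2) ^ Q := by
    rw [← Real.mul_rpow (by norm_num) (by positivity)]; congr 1; ring
  have ht5 : (5 * t) ^ Q = (10 / c) ^ Q * (c * t / 2) ^ Q := by
    rw [← Real.mul_rpow (by positivity) (by positivity)]; congr 1; field_simp; norm_num
  have h20 : (20 / c) ^ Q = 2 ^ Q * (10 / c) ^ Q := by
    rw [← Real.mul_rpow (by norm_num) (by positivity)]; congr 1; ring
  calc F.card * s ^ Q = C * 2 ^ Q * (F.card * (C⁻¹ * (s / 2) ^ Q)) := by rw [hs2]; field_simp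
    _ ≤ C * 2 ^ Q * (T.card * (C * (5 * t) ^ Q)) := by gcongr
    _ = C ^ 3 * (20 / c) ^ Q * (T.card * (C⁻¹ * (c * t / 2) ^ Q)) := by
        rw [ht5, h20]; field_simp
    _ ≤ C ^ 3 * (20 / c) ^ Q * μ.real E := by gcongr

lemma sum_measureReal_holeLayer_le (hμ : RegularUpTo μ C Q D) (hc : 0 < c) (hc1 : c ≤ 1)
    (hs : 0 ≤ s) {r : ℝ} (hr : 0 < r) (hrD : r ≤ D) (y : W) (J : ℕ) :
    ∑ j ∈ Finset.range J, μ.real (holeLayer Z c ((4 / c) ^ j * s) ∩ Metric.ball y r) ≤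
      C * r ^ Q := by
  have hfin := hμ.ne_top y r hr hrD
  rw [← measureReal_biUnion_finset
    (fun i _ j _ hij => (pairwise_disjoint_holeLayer Z hc hc1 hs hij).mono inter_subset_left
      inter_subset_left)
    (fun j _ => (measurableSet_holeLayer Z c _).inter measurableSet_ball)
    fun j _ => measure_ne_top_of_subset inter_subset_right hfin]
  exact (measureReal_mono (iUnion₂_subset fun j _ => inter_subset_right) hfin).trans
    (hμ.upper y r hr hrD)

lemma mul_card_le (hμ : RegularUpTo μ C Q D) (hc : 0 < c) (hc1 : c ≤ 1) (hR : 0 < R)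
    (hRD : 8 * R ≤ D) (hholes : ∀ a ∈ Z, ∀ r, 0 < r → 2 * r ≤ D →
      ∃ w, dist w a < r ∧ ∀ v ∈ Z, c * r ≤ dist w v) (J : ℕ) (y : W) (F : Finset Z)
    (hFR : ∀ a ∈ F, dist (a : W) y ≤ R)
    (hF : (F : Set Z).Pairwise fun a b => R / (4 / c) ^ J ≤ dist a b) :
    J * (F.card : ℝ) ≤ C ^ 4 * (60 / c) ^ Q * ((4 / c) ^ J) ^ Q := by
  have hC := hμ.const_pos
  set K := 4 / c with hK
  have hK4 : 4 ≤ K := by rw [hK, le_div_iff₀ hc]; linarith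
  have : 0 < K := by linarith
  set s := R / K ^ J with hs_def
  have hs : 0 < s := by positivity
  have hscale : ∀ j ∈ Finset.range J, F.card * s ^ Q ≤
      C ^ 3 * (20 / c) ^ Q * μ.real (holeLayer Z c (K ^ j * s) ∩ Metric.ball y (3 * R)) := by
    intro j hj
    have hsj : s ≤ K ^ j * s := le_mul_of_one_le_left hs.le (one_le_pow₀ (by linarith))
    have hjR : 4 * (K ^ j * s) ≤ R := by
      calc 4 * (K ^ j * s) ≤ K * (K ^ j * s) := by gcongr
        _ = K ^ (j + 1) * s := by ring
        _ ≤ K ^ J * s := by gcongr; exacts [by linarith, Finset.mem_range.1 hj]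
        _ = R := by rw [hs_def]; field_simp
    exact hμ.card_mul_rpow_le_measureReal_holeLayer hc hc1 hs hsj (by linarith) hRD y F hFR hF
      fun a _ => hholes a a.2 (K ^ j * s) (by positivity) (by linarith)
  have hsum : J * (F.card * s ^ Q) ≤ C ^ 3 * (20 / c) ^ Q * (C * (3 * R) ^ Q) := by
    calc J * (F.card * s ^ Q) = ∑ _j ∈ Finset.range J, F.card * s ^ Q := by
          rw [Finset.sum_const, nsmul_eq_mul, Finset.card_range]
      _ ≤ _ := Finset.sum_le_sum hscale
      _ ≤ C ^ 3 * (20 / c) ^ Q * (C * (3 * R) ^ Q) := by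
          rw [← Finset.mul_sum]
          gcongr
          exact hμ.sum_measureReal_holeLayer_le hc hc1 hs.le (by linarith) (by linarith) y J
  have hR3 : (3 * R) ^ Q = 3 ^ Q * ((K ^ J) ^ Q * s ^ Q) := by
    rw [← Real.mul_rpow (by positivity) hs.le, ← Real.mul_rpow (by norm_num) (by positivity)]
    congr 2; rw [hs_def]; field_simp
  have h60 : (60 / c) ^ Q = (20 / c) ^ Q * 3 ^ Q := by
    rw [← Real.mul_rpow (by positivity) (by norm_num)]; congr 1; ring
  refine le_of_mul_le_mul_right ?_ (show 0 < s ^ Q by positivity)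
  calc J * (F.card : ℝ) * s ^ Q ≤ C ^ 3 * (20 / c) ^ Q * (C * (3 * R) ^ Q) := by
        rw [mul_assoc]; exact hsum
    _ = C ^ 4 * (60 / c) ^ Q * (K ^ J) ^ Q * s ^ Q := by rw [hR3, h60]; ring

end RegularUpTo

/-- At every scale `R ≤ D`, an `R / L`-separated subset of a ball of radius `R` has at most `N`
points. -/
def PackingBound (Z : Type*) [MetricSpace Z] (L : ℝ) (N : ℕ) (D : ℝ) : Prop :=
  ∀ R : ℝ, 0 < R → R ≤ D → ∀ (y : Z) (F : Finset Z),
    (∀ a ∈ F, dist a y ≤ R) → (F : Set Z).Pairwise (fun a b => R / L ≤ dist a b) → F.card ≤ N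

lemma exists_lt_lt_rpow {L Q x : ℝ} (hL : 0 < L) (hQ : 0 < Q) (hx : x < L ^ Q) :
    ∃ β, 0 < β ∧ β < Q ∧ x < L ^ β := by
  have hIoo : ∀ᶠ β in 𝓝[<] Q, β ∈ Ioo 0 Q := Ioo_mem_nhdsLT hQ
  have hlt : ∀ᶠ β in 𝓝[<] Q, x < L ^ β := nhdsWithin_le_nhds <|
    (Real.continuous_const_rpow hL.ne').continuousAt.eventually (lt_mem_nhds hx)
  obtain ⟨β, ⟨hβ0, hβQ⟩, hβ⟩ := (hIoo.and hlt).exists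
  exact ⟨β, hβ0, hβQ, hβ⟩

lemma RelativelyPorous.exists_holes {W : Type*} [MetricSpace W] {Z : Set W}
    (hZ : RelativelyPorous Z) :
    ∃ c, 0 < c ∧ c ≤ 1 ∧ ∀ a b : Z, ∀ z ∈ Z, ∀ r, 0 < r → 2 * r ≤ dist a b →
      ∃ w, dist w z < r ∧ ∀ v ∈ Z, c * r ≤ dist w v := by
  obtain ⟨c, hc, hZ⟩ := hZ
  refine ⟨min c 1, by positivity, min_le_right _ _, fun a b z hz r hr hrab => ?_⟩
  have hle : min c 1 * r ≤ c * r := by gcongr; exact min_le_left _ _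
  rcases le_or_gt r (dist z a) with hza | hza
  · exact (hZ z hz a a.2 r hr hza).imp fun w hw => ⟨hw.1, fun v hv => hle.trans (hw.2 v hv)⟩
  · have hzb : r ≤ dist z b := by
      linarith [dist_triangle_left (a : W) b z, Subtype.dist_eq a b]
    exact (hZ z hz b b.2 r hr hzb).imp fun w hw => ⟨hw.1, fun v hv => hle.trans (hw.2 v hv)⟩

lemma RelativelyPorous.exists_packingBound {W : Type*} [MetricSpace W] {Q : ℝ} (hQ : 0 < Q)
    (hW : AhlforsRegular W Q) {Z : Set W} (hZ : RelativelyPorous Z) :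
    ∃ (β L : ℝ) (N : ℕ), 0 < β ∧ β < Q ∧ 100 ≤ L ∧ (N : ℝ) ≤ L ^ β ∧
      ∀ a b : Z, PackingBound Z L N (dist a b / 8) := by
  obtain ⟨c, hc, hc1, hholes⟩ := hZ.exists_holes
  obtain ⟨_, _, μ, C, hC, hμ⟩ := hW.exists_regularUpTo
  have hK4 : 4 ≤ 4 / c := by rw [le_div_iff₀ hc]; linarith
  set B := C ^ 4 * (60 / c) ^ Q
  have hB : 0 < B := by positivity
  obtain ⟨J, hJ4, hJB⟩ : ∃ J : ℕ, 4 ≤ J ∧ 4 * B ≤ J := by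
    obtain ⟨J, hJ⟩ := exists_nat_ge (4 * B)
    exact ⟨max J 4, le_max_right _ _, hJ.trans (by exact_mod_cast le_max_left _ _)⟩
  set L := (4 / c) ^ J
  have hL : 100 ≤ L := by
    calc (100 : ℝ) ≤ 4 ^ 4 := by norm_num
      _ ≤ (4 / c) ^ 4 := by gcongr
      _ ≤ L := pow_le_pow_right₀ (by linarith) hJ4
  have hLQ : 0 < L ^ Q := by positivity
  have hN : (⌊L ^ Q / 4⌋₊ : ℝ) ≤ L ^ Q / 4 := Nat.floor_le (by positivity)
  obtain ⟨β, hβ, hβQ, hNβ⟩ := exists_lt_lt_rpow (x := (⌊L ^ Q / 4⌋₊ : ℝ)) (L := L)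
    (by linarith) hQ (by linarith)
  refine ⟨β, L, ⌊L ^ Q / 4⌋₊, hβ, hβQ, hL, hNβ.le, ?_⟩
  intro a b R hR hab y F hFR hF
  have hcard := (hμ a b).mul_card_le hc hc1 hR ((le_div_iff₀' (by norm_num)).1 hab)
    (hholes a b) J y F hFR hF
  refine Nat.le_floor ((le_div_iff₀ (by norm_num)).2 (le_of_mul_le_mul_left ?_ hB))
  calc B * (F.card * 4) = 4 * B * F.card := by ring
    _ ≤ J * F.card := by gcongr
    _ ≤ B * L ^ Q := hcard

end Counting

/-! ### Mass distribution on a tree of nets -/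

lemma PackingBound.finite_and_ncard_le {Z : Type*} [MetricSpace Z] {L D R : ℝ} {N : ℕ}
    (h : PackingBound Z L N D) (hR : 0 < R) (hRD : R ≤ D) {y : Z} {S : Set Z}
    (hS : S ⊆ Metric.closedBall y R) (hsep : S.Pairwise (fun a b => R / L ≤ dist a b)) :
    S.Finite ∧ S.ncard ≤ N := by
  have hcard : ∀ F : Finset Z, (F : Set Z) ⊆ S → F.card ≤ N := fun F hF =>
    h R hR hRD y F (fun a ha => hS (hF ha)) (hsep.mono hF)
  have hfin : S.Finite := by
    by_contra hinf
    obtain ⟨F, hF, hFcard⟩ := Set.Infinite.exists_subset_card_eq hinf (N + 1)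
    exact absurd (hcard F hF) (by omega)
  refine ⟨hfin, ?_⟩
  rw [ncard_eq_toFinset_card S hfin]
  exact hcard _ (by simp)

/-- A tree of nets: at level `k` a set `pts k` of points at mutual distance at least `R₀ / L ^ k`,
and a map `parent k` sending every point of the space (in particular those of level `k + 1`) to a
nearby point of level `k`. It carries the mass distributions of Vol'berg and Konyagin. -/
structure NetTree (Z : Type*) [MetricSpace Z] (L R₀ : ℝ) (N : ℕ) where
  pts : ℕ → Set Z
  parent : ℕ → Z → Z
  hundred_le : 100 ≤ L
  pos : 0 < R₀
  packing : PackingBound Z L N (4 * R₀)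
  separated : ∀ k, (pts k).Pairwise (fun a b => R₀ / L ^ k ≤ dist a b)
  parent_mem : ∀ k z, parent k z ∈ pts k
  dist_parent_lt : ∀ k z, dist z (parent k z) < R₀ / L ^ k
  parent_eq : ∀ k z, ∀ v ∈ pts k, dist z v < R₀ / L ^ k / 2 → parent k z = v

lemma PackingBound.nonempty_netTree {Z : Type*} [MetricSpace Z] {L R₀ : ℝ} {N : ℕ} (hL : 100 ≤ L)
    (hR₀ : 0 < R₀) (h : PackingBound Z L N (4 * R₀)) : Nonempty (NetTree Z L R₀ N) := by
  have hscale : ∀ k : ℕ, 0 < R₀ / L ^ k := fun k => by positivity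
  choose pts _ hsep hcov using fun k : ℕ => exists_separated_net (univ : Set Z) (hscale k)
  have hparent : ∀ k z, ∃ v ∈ pts k, dist z v < R₀ / L ^ k ∧
      ∀ w ∈ pts k, dist z w < R₀ / L ^ k / 2 → v = w := fun k z => by
    by_cases hclose : ∃ v ∈ pts k, dist z v < R₀ / L ^ k / 2
    · obtain ⟨v, hv, hzv⟩ := hclose
      refine ⟨v, hv, by linarith [hscale k], fun w hw hzw => by_contra fun hne => ?_⟩
      linarith [hsep k hv hw hne, dist_triangle_left v w z]
    · obtain ⟨v, hv, hzv⟩ := hcov k z (mem_univ z)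
      exact ⟨v, hv, hzv, fun w hw hzw => absurd ⟨w, hw, hzw⟩ hclose⟩
  choose parent hmem hlt heq using hparent
  exact ⟨⟨pts, parent, hL, hR₀, h, hsep, hmem, hlt, heq⟩⟩

namespace NetTree

variable {Z : Type*} [MetricSpace Z] {L R₀ p : ℝ} {N : ℕ} (T : NetTree Z L R₀ N)

/-- The mesh `R₀ / L ^ k` of the net at level `k`. -/
noncomputable def scale (_T : NetTree Z L R₀ N) (k : ℕ) : ℝ := R₀ / L ^ k

lemma L_pos (T : NetTree Z L R₀ N) : 0 < L := by linarith [T.hundred_le]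

lemma scale_pos (k : ℕ) : 0 < T.scale k := by
  have hL := T.L_pos
  have hR₀ := T.pos
  unfold scale
  positivity

lemma scale_zero : T.scale 0 = R₀ := by simp [scale]

lemma L_pow_mul_scale_add (j n : ℕ) : L ^ n * T.scale (j + n) = T.scale j := by
  have hL := T.L_pos
  simp only [scale, pow_add]
  field_simp

lemma L_mul_scale_succ (k : ℕ) : L * T.scale (k + 1) = T.scale k := by
  simpa using T.L_pow_mul_scale_add k 1

lemma hundred_mul_scale_succ_le (k : ℕ) : 100 * T.scale (k + 1) ≤ T.scale k := by
  rw [← T.L_mul_scale_succ k]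
  exact mul_le_mul_of_nonneg_right T.hundred_le (T.scale_pos _).le

lemma scale_le (k : ℕ) : T.scale k ≤ R₀ := by
  have hL : 1 ≤ L := by linarith [T.hundred_le]
  exact div_le_self T.pos.le (one_le_pow₀ hL)

lemma lt_of_scale_lt {j k : ℕ} (h : T.scale k < T.scale j) : j < k := by
  by_contra! hkj
  have hL : 1 ≤ L := by linarith [T.hundred_le]
  have hR₀ := T.pos
  refine h.not_ge (div_le_div_of_nonneg_left hR₀.le (by positivity) ?_)
  exact pow_le_pow_right₀ hL hkj

lemma exists_scale_succ_lt_le {ε : ℝ} (hε : 0 < ε) (hεR : ε ≤ R₀) :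
    ∃ k, T.scale (k + 1) < ε ∧ ε ≤ T.scale k := by
  have hL := T.L_pos
  have hR₀ := T.pos
  obtain ⟨k, hlt, hle⟩ := exists_nat_pow_near_of_lt_one (x := ε / R₀) (y := L⁻¹) (by positivity)
    ((div_le_one hR₀).2 hεR) (by positivity) (inv_lt_one_of_one_lt₀ (by linarith [T.hundred_le]))
  refine ⟨k, ?_, ?_⟩
  · rwa [lt_div_iff₀ hR₀, inv_pow, inv_mul_eq_div] at hlt
  · rwa [div_le_iff₀ hR₀, inv_pow, inv_mul_eq_div] at hle

lemma parent_parent_succ {k : ℕ} {v : Z} (hv : v ∈ T.pts k) :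
    T.parent k (T.parent (k + 1) v) = v := by
  refine T.parent_eq k _ v hv ?_
  rw [dist_comm]
  have hdist : dist v (T.parent (k + 1) v) < T.scale (k + 1) := T.dist_parent_lt _ _
  change _ < T.scale k / 2
  linarith [T.hundred_mul_scale_succ_le k, T.scale_pos k]

/-- The points of level `k + 1` with parent `v`. -/
def children (k : ℕ) (v : Z) : Set Z := {u ∈ T.pts (k + 1) | T.parent k u = v}

lemma finite_children_and_ncard_le (k : ℕ) (v : Z) :
    (T.children k v).Finite ∧ (T.children k v).ncard ≤ N := by
  refine T.packing.finite_and_ncard_le (y := v) (T.scale_pos k)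
    (by linarith [T.scale_le k, T.pos]) ?_ fun a ha b hb hab => ?_
  · rintro u ⟨-, rfl⟩
    exact (T.dist_parent_lt k u).le
  · rw [← T.L_mul_scale_succ k, mul_div_cancel_left₀ _ T.L_pos.ne']
    exact T.separated (k + 1) ha.1 hb.1 hab

lemma parent_succ_mem_children {k : ℕ} {v : Z} (hv : v ∈ T.pts k) :
    T.parent (k + 1) v ∈ T.children k v :=
  ⟨T.parent_mem _ _, T.parent_parent_succ hv⟩

open Classical in
/-- The proportion of the mass of `parent k u` handed down to its child `u`: every child receives
`p`, except the central one, which takes all that remains. -/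
noncomputable def share (p : ℝ) (k : ℕ) (u : Z) : ℝ :=
  if u = T.parent (k + 1) (T.parent k u) then 1 - ((T.children k (T.parent k u)).ncard - 1) * p
  else p

lemma le_share (hp : 0 ≤ p) (hNp : N * p ≤ 1) (k : ℕ) (u : Z) : p ≤ T.share p k u := by
  unfold share
  split_ifs
  · have hle : ((T.children k (T.parent k u)).ncard : ℝ) * p ≤ N * p := by
      gcongr; exact (T.finite_children_and_ncard_le _ _).2
    linarith
  · rfl

lemma share_le_one (hp : 0 ≤ p) (hNp : N * p ≤ 1) (k : ℕ) (u : Z) : T.share p k u ≤ 1 := by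
  have hcard : 1 ≤ (T.children k (T.parent k u)).ncard := by
    rw [Nat.one_le_iff_ne_zero, Ne, ncard_eq_zero (T.finite_children_and_ncard_le _ _).1]
    exact (nonempty_of_mem (T.parent_succ_mem_children (T.parent_mem k u))).ne_empty
  have hcard' : (1 : ℝ) ≤ (T.children k (T.parent k u)).ncard := by exact_mod_cast hcard
  have hN : (1 : ℝ) ≤ N :=
    hcard'.trans (by exact_mod_cast (T.finite_children_and_ncard_le _ _).2)
  unfold share
  split_ifs <;> nlinarith

lemma sum_share_children {k : ℕ} {v : Z} (hv : v ∈ T.pts k) :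
    ∑ u ∈ (T.finite_children_and_ncard_le k v).1.toFinset, T.share p k u = 1 := by
  classical
  set F := (T.finite_children_and_ncard_le k v).1.toFinset
  have hcard : (T.children k v).ncard = F.card := ncard_eq_toFinset_card _ _
  have hshare : ∀ u ∈ F, T.share p k u =
      p + if u = T.parent (k + 1) v then 1 - F.card * p else 0 := fun u hu => by
    have hu : T.parent k u = v := ((Finite.mem_toFinset _).1 hu).2
    rw [share, hu, hcard]
    split_ifs <;> ring
  have hmem : T.parent (k + 1) v ∈ F := (Finite.mem_toFinset _).2 (T.parent_succ_mem_children hv)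
  rw [Finset.sum_congr rfl hshare, Finset.sum_add_distrib, Finset.sum_ite_eq' F, if_pos hmem,
    Finset.sum_const, nsmul_eq_mul]
  ring

/-- The mass of a point of level `k`, obtained from unit masses at level `0` by handing down
`share`s. -/
noncomputable def mass (p : ℝ) : ℕ → Z → ℝ
  | 0, _ => 1
  | k + 1, u => T.share p k u * mass p k (T.parent k u)

lemma mass_pos (hp : 0 < p) (hNp : N * p ≤ 1) : ∀ (k : ℕ) (u : Z), 0 < T.mass p k u
  | 0, _ => one_pos
  | k + 1, u => mul_pos (hp.trans_le (T.le_share hp.le hNp k u)) (mass_pos hp hNp k _)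

lemma mul_mass_parent_le (hp : 0 < p) (hNp : N * p ≤ 1) (k : ℕ) (u : Z) :
    p * T.mass p k (T.parent k u) ≤ T.mass p (k + 1) u :=
  mul_le_mul_of_nonneg_right (T.le_share hp.le hNp k u) (T.mass_pos hp hNp k _).le

lemma mass_succ_le (hp : 0 < p) (hNp : N * p ≤ 1) (k : ℕ) (u : Z) :
    T.mass p (k + 1) u ≤ T.mass p k (T.parent k u) :=
  mul_le_of_le_one_left (T.mass_pos hp hNp k _).le (T.share_le_one hp.le hNp k u)

lemma share_eq_of_parent_ne {k : ℕ} {u u' : Z} (hu : dist u u' ≤ 7 * T.scale (k + 1))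
    (hne : T.parent k u ≠ T.parent k u') : T.share p k u = p := by
  rw [share, if_neg]
  intro hcenter
  refine hne (T.parent_eq k u' _ (T.parent_mem k u) ?_).symm
  have hdist : dist (T.parent k u) u < T.scale (k + 1) := by
    have hlt := T.dist_parent_lt (k + 1) (T.parent k u)
    rwa [← hcenter] at hlt
  change _ < T.scale k / 2
  linarith [dist_triangle u' u (T.parent k u), dist_comm u u', dist_comm (T.parent k u) u,
    T.hundred_mul_scale_succ_le k, T.scale_pos k]

/-- Neighbours with different parents are both non-central, so the comparison is inherited from
their parents. -/
lemma mul_mass_le_mass_of_dist_le (hp : 0 < p) (hNp : N * p ≤ 1) (hp1 : p ≤ 1) (k : ℕ) (u u' : Z)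
    (h : dist u u' ≤ 7 * T.scale k) : p * T.mass p k u ≤ T.mass p k u' := by
  induction k generalizing u u' with
  | zero => simpa [mass] using hp1
  | succ k ih =>
    by_cases hpar : T.parent k u = T.parent k u'
    · calc p * T.mass p (k + 1) u ≤ p * T.mass p k (T.parent k u) := by
            gcongr; exact T.mass_succ_le hp hNp k u
        _ = p * T.mass p k (T.parent k u') := by rw [hpar]
        _ ≤ T.mass p (k + 1) u' := T.mul_mass_parent_le hp hNp k u'
    · have hdist : dist (T.parent k u) (T.parent k u') ≤ 7 * T.scale k := by
        have hu : dist u (T.parent k u) < T.scale k := T.dist_parent_lt k u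
        have hu' : dist u' (T.parent k u') < T.scale k := T.dist_parent_lt k u'
        linarith [dist_triangle4 (T.parent k u) u u' (T.parent k u'),
          dist_comm u (T.parent k u), T.hundred_mul_scale_succ_le k, T.scale_pos k]
      rw [mass, mass, T.share_eq_of_parent_ne h hpar,
        T.share_eq_of_parent_ne (by rwa [dist_comm]) (Ne.symm hpar)]
      exact mul_le_mul_of_nonneg_left (ih _ _ hdist) hp.le

/-- The point of level `j` reached from a point of level `j + n` by passing to parents `n` times. -/
def ancestor (j : ℕ) : ℕ → Z → Z
  | 0, z => z
  | n + 1, z => ancestor j n (T.parent (j + n) z)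

lemma dist_ancestor_le (j n : ℕ) (z : Z) :
    dist z (T.ancestor j n z) ≤ 2 * (T.scale j - T.scale (j + n)) := by
  induction n generalizing z with
  | zero => simp [ancestor]
  | succ n ih =>
    have hz : dist z (T.parent (j + n) z) < T.scale (j + n) := T.dist_parent_lt _ _
    have hstep := T.hundred_mul_scale_succ_le (j + n)
    rw [ancestor, ← add_assoc]
    linarith [ih (T.parent (j + n) z), T.scale_pos (j + n),
      dist_triangle z (T.parent (j + n) z) (T.ancestor j n (T.parent (j + n) z))]

lemma pow_mul_mass_ancestor_le (hp : 0 < p) (hNp : N * p ≤ 1) (j n : ℕ) (z : Z) :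
    p ^ n * T.mass p j (T.ancestor j n z) ≤ T.mass p (j + n) z := by
  induction n generalizing z with
  | zero => simp [ancestor]
  | succ n ih =>
    calc p ^ (n + 1) * T.mass p j (T.ancestor j (n + 1) z)
        = p * (p ^ n * T.mass p j (T.ancestor j n (T.parent (j + n) z))) := by
          rw [ancestor]; ring
      _ ≤ p * T.mass p (j + n) (T.parent (j + n) z) := by gcongr; exact ih _
      _ ≤ T.mass p (j + n + 1) z := T.mul_mass_parent_le hp hNp _ _

/-- `mass`, as an extended nonnegative function supported on the net of level `k`. -/
noncomputable def weight (p : ℝ) (k : ℕ) : Z → ENNReal :=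
  (T.pts k).indicator fun u => ENNReal.ofReal (T.mass p k u)

lemma weight_of_mem {k : ℕ} {v : Z} (hv : v ∈ T.pts k) :
    T.weight p k v = ENNReal.ofReal (T.mass p k v) :=
  indicator_of_mem hv _

lemma tsum_weight_fiber (hp : 0 < p) (hNp : N * p ≤ 1) (k : ℕ) (v : Z) :
    ∑' u : T.parent k ⁻¹' {v}, T.weight p (k + 1) u = T.weight p k v := by
  by_cases hv : v ∈ T.pts k
  · set F := (T.finite_children_and_ncard_le k v).1.toFinset with hF
    have hFv : ∀ u ∈ F, T.parent k u = v := fun u hu => ((Finite.mem_toFinset _).1 hu).2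
    have hind : (T.parent k ⁻¹' {v}).indicator (T.weight p (k + 1)) =
        (T.children k v).indicator fun u => ENNReal.ofReal (T.mass p (k + 1) u) := by
      rw [weight, indicator_indicator, inter_comm]
      rfl
    have hchildren : T.children k v = F := by rw [hF, Finite.coe_toFinset]
    rw [tsum_subtype, hind, ← tsum_subtype, hchildren,
      F.tsum_subtype' (fun u => ENNReal.ofReal (T.mass p (k + 1) u)), T.weight_of_mem hv,
      ← ENNReal.ofReal_sum_of_nonneg fun u _ => (T.mass_pos hp hNp _ u).le]
    congr 1
    calc ∑ u ∈ F, T.mass p (k + 1) u = ∑ u ∈ F, T.share p k u * T.mass p k v :=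
          Finset.sum_congr rfl fun u hu => by rw [mass, hFv u hu]
      _ = T.mass p k v := by rw [← Finset.sum_mul, T.sum_share_children hv, one_mul]
  · have hempty : T.parent k ⁻¹' {v} = ∅ :=
      eq_empty_of_forall_notMem fun u hu => hv (hu ▸ T.parent_mem k u)
    rw [hempty, tsum_empty, weight, indicator_of_notMem hv]

/-- The total mass of the points of level `k` in `B`. -/
noncomputable def levelMass (p : ℝ) (k : ℕ) (B : Set Z) : ENNReal := ∑' u : B, T.weight p k u

lemma levelMass_mono {k : ℕ} {A B : Set Z} (h : A ⊆ B) :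
    T.levelMass p k A ≤ T.levelMass p k B :=
  ENNReal.tsum_mono_subtype _ h

lemma levelMass_succ_preimage_parent (hp : 0 < p) (hNp : N * p ≤ 1) (k : ℕ) (B : Set Z) :
    T.levelMass p (k + 1) (T.parent k ⁻¹' B) = T.levelMass p k B := by
  rw [levelMass, levelMass, tsum_subtype, tsum_subtype B, ← ENNReal.tsum_fiberwise _ (T.parent k)]
  refine tsum_congr fun v => ?_
  by_cases hv : v ∈ B
  · rw [indicator_of_mem hv, ← T.tsum_weight_fiber hp hNp]
    refine tsum_congr fun u => indicator_of_mem ?_ _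
    rwa [mem_preimage, show T.parent k u = v from u.2]
  · rw [indicator_of_notMem hv, ENNReal.tsum_eq_zero]
    refine fun u => indicator_of_notMem ?_ _
    rwa [mem_preimage, show T.parent k u = v from u.2]

lemma levelMass_preimage_ancestor (hp : 0 < p) (hNp : N * p ≤ 1) (j n : ℕ) (B : Set Z) :
    T.levelMass p (j + n) (T.ancestor j n ⁻¹' B) = T.levelMass p j B := by
  induction n with
  | zero => rfl
  | succ n ih =>
    rw [← ih, ← T.levelMass_succ_preimage_parent hp hNp (j + n)]
    rfl

lemma levelMass_ball_le (hp : 0 < p) (hNp : N * p ≤ 1) {j K : ℕ} (hjK : j ≤ K) {x : Z}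
    {R : ℝ} (hR : R ≤ T.scale j) {M : ENNReal}
    (hM : ∀ v, dist v x < 3 * T.scale j → ENNReal.ofReal (T.mass p j v) ≤ M) :
    T.levelMass p K (Metric.ball x R) ≤ N * M := by
  obtain ⟨n, rfl⟩ := Nat.exists_eq_add_of_le hjK
  have hj := T.scale_pos j
  set S := Metric.ball x (3 * T.scale j) ∩ T.pts j
  have hsub : Metric.ball x R ⊆ T.ancestor j n ⁻¹' Metric.ball x (3 * T.scale j) := fun z hz => by
    have hdist := T.dist_ancestor_le j n z
    have hn := T.scale_pos (j + n)
    rw [Metric.mem_ball] at hz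
    rw [mem_preimage, Metric.mem_ball]
    linarith [dist_triangle_left (T.ancestor j n z) x z]
  obtain ⟨hfin, hcard⟩ : S.Finite ∧ S.ncard ≤ N := by
    refine T.packing.finite_and_ncard_le (y := x) (R := 4 * T.scale j) (by linarith)
      (by linarith [T.scale_le j]) (fun z hz => ?_) fun a ha b hb hab => ?_
    · exact Metric.ball_subset_closedBall (Metric.ball_subset_ball (by linarith) hz.1)
    · refine le_trans ?_ (T.separated j ha.2 hb.2 hab)
      rw [div_le_iff₀ T.L_pos]
      nlinarith [T.hundred_le, show T.scale j = R₀ / L ^ j from rfl]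
  obtain ⟨F, hF⟩ := hfin.exists_finset_coe
  rw [← hF, ncard_coe_finset] at hcard
  calc T.levelMass p (j + n) (Metric.ball x R)
      ≤ T.levelMass p j (Metric.ball x (3 * T.scale j)) :=
        (T.levelMass_mono hsub).trans (T.levelMass_preimage_ancestor hp hNp j n _).le
    _ = ∑' u : S, ENNReal.ofReal (T.mass p j u) := by
        rw [levelMass, tsum_subtype, weight, indicator_indicator, ← tsum_subtype]
    _ = ∑ u ∈ F, ENNReal.ofReal (T.mass p j u) := by
        rw [← hF]
        exact F.tsum_subtype' fun u => ENNReal.ofReal (T.mass p j u)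
    _ ≤ ∑ _u ∈ F, M := Finset.sum_le_sum fun u hu => hM u (hF.subset hu).1
    _ ≤ N * M := by
        rw [Finset.sum_const, nsmul_eq_mul]
        gcongr

lemma le_levelMass_ball (hp : 0 < p) (hNp : N * p ≤ 1) {k K : ℕ} (hkK : k ≤ K) (x : Z) {r : ℝ}
    (hr : 3 * T.scale k ≤ r) :
    ENNReal.ofReal (T.mass p k (T.parent k x)) ≤ T.levelMass p K (Metric.ball x r) := by
  obtain ⟨n, rfl⟩ := Nat.exists_eq_add_of_le hkK
  set v := T.parent k x
  have hsub : T.ancestor k n ⁻¹' {v} ⊆ Metric.ball x r := fun z hz => by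
    have hdist := T.dist_ancestor_le k n z
    rw [show T.ancestor k n z = v from hz] at hdist
    have hv : dist x v < T.scale k := T.dist_parent_lt k x
    rw [Metric.mem_ball]
    linarith [dist_triangle_right z x v, T.scale_pos (k + n)]
  calc ENNReal.ofReal (T.mass p k v) = T.levelMass p k {v} := by
        rw [levelMass, tsum_singleton v, T.weight_of_mem (T.parent_mem k x)]
    _ = T.levelMass p (k + n) (T.ancestor k n ⁻¹' {v}) :=
        (T.levelMass_preimage_ancestor hp hNp k n _).symm
    _ ≤ T.levelMass p (k + n) (Metric.ball x r) := T.levelMass_mono hsub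

lemma levelMass_ball_le_mul (hp : 0 < p) (hNp : N * p ≤ 1) (hp1 : p ≤ 1) {j n K : ℕ}
    (hK : j + n ≤ K) {x x' : Z} {r R : ℝ} (hxx' : dist x x' ≤ R) (hR : R ≤ T.scale j)
    (hr : 3 * T.scale (j + n) ≤ r) :
    T.levelMass p K (Metric.ball x R) ≤
      ENNReal.ofReal (N * (p ^ (n + 1))⁻¹) * T.levelMass p K (Metric.ball x' r) := by
  set z := T.parent (j + n) x'
  have hz : dist x' z < T.scale (j + n) := T.dist_parent_lt _ _
  have hmass : ∀ v, dist v x < 3 * T.scale j →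
      T.mass p j v ≤ (p ^ (n + 1))⁻¹ * T.mass p (j + n) z := fun v hv => by
    have hva : dist v (T.ancestor j n z) ≤ 7 * T.scale j := by
      linarith [dist_triangle4 v x x' z, dist_triangle v z (T.ancestor j n z),
        T.dist_ancestor_le j n z, T.scale_pos j, T.scale_pos (j + n)]
    rw [inv_mul_eq_div, le_div_iff₀' (by positivity)]
    calc p ^ (n + 1) * T.mass p j v = p ^ n * (p * T.mass p j v) := by ring
      _ ≤ p ^ n * T.mass p j (T.ancestor j n z) := by
          gcongr; exact T.mul_mass_le_mass_of_dist_le hp hNp hp1 j _ _ hva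
      _ ≤ T.mass p (j + n) z := T.pow_mul_mass_ancestor_le hp hNp j n z
  calc T.levelMass p K (Metric.ball x R)
      ≤ N * ENNReal.ofReal ((p ^ (n + 1))⁻¹ * T.mass p (j + n) z) :=
        T.levelMass_ball_le hp hNp (le_of_add_le_left hK) hR fun v hv =>
          ENNReal.ofReal_le_ofReal (hmass v hv)
    _ = ENNReal.ofReal (N * (p ^ (n + 1))⁻¹) * ENNReal.ofReal (T.mass p (j + n) z) := by
        rw [← ENNReal.ofReal_natCast, ← ENNReal.ofReal_mul (by positivity),
          ← ENNReal.ofReal_mul (by positivity), mul_assoc]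
    _ ≤ _ := by gcongr; exact T.le_levelMass_ball hp hNp hK x' hr

/-- The points of level `k` with their masses, as a measure. -/
noncomputable def levelMeasure [MeasurableSpace Z] (p : ℝ) (k : ℕ) : Measure Z :=
  Measure.sum fun u => T.weight p k u • Measure.dirac u

lemma levelMeasure_apply [MeasurableSpace Z] (k : ℕ) {B : Set Z} (hB : MeasurableSet B) :
    T.levelMeasure p k B = T.levelMass p k B := by
  rw [levelMeasure, Measure.sum_apply _ hB, levelMass, tsum_subtype]
  refine tsum_congr fun u => ?_
  rw [Measure.smul_apply, Measure.dirac_apply' u hB, smul_eq_mul]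
  by_cases hu : u ∈ B <;> simp [hu]

end NetTree

/-- `ν` is homogeneous with exponent `β` and constant `C` at scales between `r₀` and `R₀`: passing
from a ball to a ball of smaller radius nearby divides the mass by at most `C` times the `β`-th
power of the ratio of the radii. -/
def HomogeneousBetween {Z : Type*} [MetricSpace Z] [MeasurableSpace Z] (β C r₀ R₀ : ℝ)
    (ν : Measure Z) : Prop :=
  ∀ (x x' : Z) (r R : ℝ), 0 < r → r₀ ≤ r → r ≤ R → R ≤ R₀ → dist x x' ≤ R →
    ν (Metric.ball x R) ≤ ENNReal.ofReal (C * (R / r) ^ β) * ν (Metric.ball x' r)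

namespace NetTree

variable {Z : Type*} [MetricSpace Z] [MeasurableSpace Z] [OpensMeasurableSpace Z]
  {L R₀ β : ℝ} {N : ℕ} (T : NetTree Z L R₀ N)

lemma homogeneousBetween_levelMeasure (hβ : 0 < β) (hN : N ≤ L ^ β) {r₀ : ℝ} {K : ℕ}
    (hK : T.scale K < r₀ / 4) :
    HomogeneousBetween β (N * L ^ β * (4 * L ^ 2) ^ β) r₀ R₀ (T.levelMeasure (L ^ β)⁻¹ K) := by
  intro x x' r R hr' hr hrR hR hxx'
  have hL := T.L_pos
  have hLβ : 1 ≤ L ^ β := Real.one_le_rpow (by linarith [T.hundred_le]) hβ.le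
  obtain ⟨k, hk, hk'⟩ := T.exists_scale_succ_lt_le (ε := r / 4) (by linarith) (by linarith)
  obtain ⟨j, hj, hj'⟩ := T.exists_scale_succ_lt_le (ε := R) (by linarith) hR
  have hkK : k + 1 ≤ K := T.lt_of_scale_lt (by linarith)
  have hjk : j ≤ k + 1 := (T.lt_of_scale_lt (by linarith)).le
  obtain ⟨n, hn⟩ := Nat.exists_eq_add_of_le hjk
  have hratio : L ^ n ≤ 4 * L ^ 2 * (R / r) := by
    have hjn := T.L_pow_mul_scale_add j n
    rw [← hn] at hjn
    rw [mul_div_assoc', le_div_iff₀ (by linarith)]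
    calc L ^ n * r ≤ L ^ n * (4 * (L * T.scale (k + 1))) := by
          gcongr; linarith [T.L_mul_scale_succ k]
      _ = 4 * L * (L ^ n * T.scale (k + 1)) := by ring
      _ = 4 * L * (L * T.scale (j + 1)) := by rw [hjn, T.L_mul_scale_succ]
      _ ≤ 4 * L * (L * R) := by gcongr
      _ = 4 * L ^ 2 * R := by ring
  have hpow : (((L ^ β)⁻¹) ^ (n + 1))⁻¹ ≤ L ^ β * ((4 * L ^ 2) ^ β * (R / r) ^ β) := by
    have hR' : 0 < R := hr'.trans_le hrR
    rw [inv_pow, inv_inv, pow_succ', Real.rpow_pow_comm hL.le,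
      ← Real.mul_rpow (x := 4 * L ^ 2) (by positivity) (by positivity)]
    gcongr
  rw [T.levelMeasure_apply _ measurableSet_ball, T.levelMeasure_apply _ measurableSet_ball]
  refine (T.levelMass_ball_le_mul (n := n) (by positivity)
    (mul_inv_le_one_of_le₀ hN (by positivity)) (inv_le_one_of_one_le₀ hLβ) (by omega)
    hxx' hj' (r := r) (by rw [← hn]; linarith)).trans ?_
  refine mul_le_mul_left (ENNReal.ofReal_le_ofReal ?_) _
  calc N * (((L ^ β)⁻¹) ^ (n + 1))⁻¹ ≤ N * (L ^ β * ((4 * L ^ 2) ^ β * (R / r) ^ β)) := by gcongr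
    _ = N * L ^ β * (4 * L ^ 2) ^ β * (R / r) ^ β := by ring

lemma levelMeasure_ball_top_le (hN : N ≤ L ^ β) (K : ℕ) (x : Z) :
    T.levelMeasure (L ^ β)⁻¹ K (Metric.ball x R₀) ≤ N := by
  have hL := T.L_pos
  rw [T.levelMeasure_apply _ measurableSet_ball]
  simpa using T.levelMass_ball_le (by positivity) (mul_inv_le_one_of_le₀ hN (by positivity))
    K.zero_le T.scale_zero.ge (x := x) (M := 1) fun v _ => by simp [mass]

lemma le_levelMeasure_ball_top (hN : N ≤ L ^ β) {K : ℕ} (hK : 1 ≤ K) (x : Z) :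
    ENNReal.ofReal (L ^ β)⁻¹ ≤ T.levelMeasure (L ^ β)⁻¹ K (Metric.ball x R₀) := by
  have hL := T.L_pos
  have hp : 0 < (L ^ β)⁻¹ := by positivity
  have hNp : N * (L ^ β)⁻¹ ≤ 1 := mul_inv_le_one_of_le₀ hN (by positivity)
  rw [T.levelMeasure_apply _ measurableSet_ball]
  refine (ENNReal.ofReal_le_ofReal ?_).trans (T.le_levelMass_ball hp hNp hK x (r := R₀) ?_)
  · simpa [mass] using T.mul_mass_parent_le hp hNp 0 (T.parent 1 x)
  · linarith [T.hundred_mul_scale_succ_le 0, T.scale_zero, T.scale_pos 1]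

end NetTree

lemma HomogeneousBetween.mono {Z : Type*} [MetricSpace Z] [MeasurableSpace Z]
    {β C C' r₀ r₁ R₀ R₁ : ℝ} {ν : Measure Z} (h : HomogeneousBetween β C r₀ R₀ ν) (hC : C ≤ C')
    (hr : r₀ ≤ r₁) (hR : R₁ ≤ R₀) : HomogeneousBetween β C' r₁ R₁ ν := by
  intro x x' r R hr' hr₁ hrR hR₁ hxx'
  have hR' : 0 < R := hr'.trans_le hrR
  refine (h x x' r R hr' (hr.trans hr₁) hrR (hR₁.trans hR) hxx').trans ?_
  gcongr

lemma exists_homogeneousBetween {Z : Type*} [MetricSpace Z] [MeasurableSpace Z]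
    [OpensMeasurableSpace Z] {L β : ℝ} {N : ℕ} (hL : 100 ≤ L) (hβ : 0 < β) (hN : N ≤ L ^ β) :
    ∃ C : ℝ, 1 ≤ C ∧ ∀ r₀ R₀ : ℝ, 0 < r₀ → r₀ ≤ R₀ → PackingBound Z L N (4 * R₀) →
      ∃ ν : Measure Z, HomogeneousBetween β C r₀ R₀ ν ∧
        ∀ x, ν (Metric.ball x R₀) ≤ ENNReal.ofReal C ∧
          1 ≤ ENNReal.ofReal C * ν (Metric.ball x R₀) := by
  have hLβ : 1 ≤ L ^ β := Real.one_le_rpow (by linarith) hβ.le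
  have h4L : 1 ≤ (4 * L ^ 2) ^ β := Real.one_le_rpow (by nlinarith) hβ.le
  set C : ℝ := (N + 1) * L ^ β * (4 * L ^ 2) ^ β with hC_def
  have hNC : (N + 1) * L ^ β ≤ C := le_mul_of_one_le_right (by positivity) h4L
  have hC : L ^ β ≤ C := by nlinarith [N.cast_nonneg (α := ℝ)]
  refine ⟨C, hLβ.trans hC, fun r₀ R₀ hr₀ hrR hpack => ?_⟩
  obtain ⟨T⟩ := hpack.nonempty_netTree hL (hr₀.trans_le hrR)
  obtain ⟨K, hK, -⟩ := T.exists_scale_succ_lt_le (ε := r₀ / 4) (by linarith) (by linarith)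
  refine ⟨T.levelMeasure (L ^ β)⁻¹ (K + 1), ?_, fun x => ⟨?_, ?_⟩⟩
  · refine (T.homogeneousBetween_levelMeasure hβ hN hK).mono ?_ le_rfl le_rfl
    rw [hC_def]
    gcongr
    linarith
  · refine (T.levelMeasure_ball_top_le hN _ x).trans ?_
    rw [← ENNReal.ofReal_natCast]
    exact ENNReal.ofReal_le_ofReal (by nlinarith [N.cast_nonneg (α := ℝ)])
  · calc (1 : ENNReal) ≤ ENNReal.ofReal (C * (L ^ β)⁻¹) := by
          rw [ENNReal.one_le_ofReal, ← div_eq_mul_inv, one_le_div (by positivity)]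
          exact hC
      _ = ENNReal.ofReal C * ENNReal.ofReal (L ^ β)⁻¹ := ENNReal.ofReal_mul (by linarith)
      _ ≤ _ := by gcongr; exact T.le_levelMeasure_ball_top hN K.succ_pos x

/-! ### Homogeneous measures as vague limits -/

section Compactness

variable {Z : Type*} [MetricSpace Z] {L D R : ℝ} {N : ℕ}

lemma PackingBound.exists_finite_cover_closedBall (h : PackingBound Z L N D) (hL : 1 ≤ L)
    (hR : 0 < R) (hRD : R ≤ D) (y : Z) (n : ℕ) :
    ∃ t : Set Z, t.Finite ∧ Metric.closedBall y R ⊆ ⋃ z ∈ t, Metric.closedBall z (R / L ^ n) := by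
  induction n with
  | zero => exact ⟨{y}, finite_singleton y, by simp⟩
  | succ n ih =>
    obtain ⟨t, ht, hcov⟩ := ih
    have hRn : 0 < R / L ^ n := by positivity
    choose s hs hsep hscov using fun z : Z =>
      exists_separated_net (Metric.closedBall z (R / L ^ n)) (s := R / L ^ n / L) (by positivity)
    have hfin : ∀ z, (s z).Finite := fun z =>
      (h.finite_and_ncard_le hRn ((div_le_self hR.le (one_le_pow₀ hL)).trans hRD) (hs z)
        (hsep z)).1
    refine ⟨⋃ z ∈ t, s z, ht.biUnion fun z _ => hfin z, fun w hw => ?_⟩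
    obtain ⟨z, hz, hwz⟩ := mem_iUnion₂.1 (hcov hw)
    obtain ⟨v, hv, hwv⟩ := hscov z w hwz
    rw [div_div, ← pow_succ] at hwv
    exact mem_biUnion (mem_biUnion hz hv) (Metric.mem_closedBall.2 hwv.le)

lemma PackingBound.isCompact_closedBall [CompleteSpace Z] (h : PackingBound Z L N D) (hL : 1 < L)
    (hR : 0 < R) (hRD : R ≤ D) (y : Z) : IsCompact (Metric.closedBall y R) := by
  refine TotallyBounded.isCompact_of_isClosed ?_ Metric.isClosed_closedBall
  rw [Metric.totallyBounded_iff]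
  intro ε hε
  obtain ⟨n, hn⟩ := pow_unbounded_of_one_lt (R / ε) hL
  obtain ⟨t, ht, hcov⟩ := h.exists_finite_cover_closedBall hL.le hR hRD y n
  refine ⟨t, ht, hcov.trans (iUnion₂_mono fun z _ => Metric.closedBall_subset_ball ?_)⟩
  rwa [div_lt_comm₀ (by positivity) hε]

lemma PackingBound.locallyCompactSpace [CompleteSpace Z] (h : PackingBound Z L N D) (hL : 1 < L)
    (hD : 0 < D) : LocallyCompactSpace Z := by
  have : WeaklyLocallyCompactSpace Z :=
    ⟨fun x => ⟨Metric.closedBall x D, h.isCompact_closedBall hL hD le_rfl x,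
      Metric.closedBall_mem_nhds x hD⟩⟩
  infer_instance

end Compactness

section VagueLimit

open CompactlySupported

variable {ι Z : Type*} [TopologicalSpace Z] [MeasurableSpace Z]

/-- Vague convergence of measures: convergence of the integrals of nonnegative continuous functions
with compact support. -/
def TendstoVaguely (F : Filter ι) (ν : ι → Measure Z) (μ : Measure Z) : Prop :=
  ∀ f : C_c(Z, ℝ≥0), Tendsto (fun n => ∫⁻ z, f z ∂ν n) F (𝓝 (∫⁻ z, f z ∂μ))

lemma exists_eventually_measure_le_of_isCompact {F : Filter ι} {ν : ι → Measure Z}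
    (h : ∀ x, ∃ V ∈ 𝓝 x, ∃ M : ENNReal, M ≠ ⊤ ∧ ∀ᶠ n in F, ν n V ≤ M) {K : Set Z}
    (hK : IsCompact K) : ∃ M : ENNReal, M ≠ ⊤ ∧ ∀ᶠ n in F, ν n K ≤ M := by
  refine hK.induction_on (p := fun K => ∃ M : ENNReal, M ≠ ⊤ ∧ ∀ᶠ n in F, ν n K ≤ M)
    ⟨0, ENNReal.zero_ne_top, by simp⟩ ?_ ?_ fun x _ => ?_
  · rintro A B hAB ⟨M, hM, hB⟩
    exact ⟨M, hM, hB.mono fun n hn => (measure_mono hAB).trans hn⟩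
  · rintro A B ⟨M, hM, hA⟩ ⟨M', hM', hB⟩
    refine ⟨M + M', ENNReal.add_ne_top.2 ⟨hM, hM'⟩, ?_⟩
    filter_upwards [hA, hB] with n hnA hnB
    exact (measure_union_le A B).trans (add_le_add hnA hnB)
  · obtain ⟨V, hV, hM⟩ := h x
    exact ⟨V, nhdsWithin_le_nhds hV, hM⟩

lemma lintegral_le_mul_measure_tsupport (f : C_c(Z, ℝ≥0)) :
    ∃ c : ℝ≥0, ∀ ν : Measure Z, ∫⁻ z, f z ∂ν ≤ c * ν (tsupport f) := by
  obtain ⟨c, hc⟩ := (f.hasCompactSupport.isCompact_range f.continuous).bddAbove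
  refine ⟨c, fun ν => le_trans (lintegral_mono fun z => ?_)
    (lintegral_indicator_const_le (tsupport f) (c : ENNReal))⟩
  by_cases hz : z ∈ tsupport f
  · rw [indicator_of_mem hz]
    exact ENNReal.coe_le_coe.2 (hc ⟨z, rfl⟩)
  · simp [image_eq_zero_of_notMem_tsupport hz]

lemma exists_tendstoVaguely [T2Space Z] [LocallyCompactSpace Z] [BorelSpace Z]
    (U : Ultrafilter ι) {ν : ι → Measure Z}
    (h : ∀ x, ∃ V ∈ 𝓝 x, ∃ M : ENNReal, M ≠ ⊤ ∧ ∀ᶠ n in (U : Filter ι), ν n V ≤ M) :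
    ∃ μ : Measure Z, TendstoVaguely U ν μ := by
  have hlim : ∀ f : C_c(Z, ℝ≥0), ∃ l : ℝ≥0, Tendsto (fun n => ∫⁻ z, f z ∂ν n) U (𝓝 l) := by
    intro f
    obtain ⟨l, hl⟩ : ∃ l : ENNReal, Tendsto (fun n => ∫⁻ z, f z ∂ν n) U (𝓝 l) :=
      ⟨_, (U.map fun n => ∫⁻ z, f z ∂ν n).le_nhds_lim⟩
    obtain ⟨c, hc⟩ := lintegral_le_mul_measure_tsupport f
    obtain ⟨M, hM, hν⟩ := exists_eventually_measure_le_of_isCompact h f.hasCompactSupport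
    have hle : l ≤ c * M := le_of_tendsto hl <| hν.mono fun n hn => (hc (ν n)).trans (by gcongr)
    lift l to ℝ≥0 using ne_top_of_le_ne_top (ENNReal.mul_ne_top ENNReal.coe_ne_top hM) hle
    exact ⟨l, hl⟩
  choose l hl using hlim
  have hmeas : ∀ f : C_c(Z, ℝ≥0), Measurable fun z => (f z : ENNReal) := fun f =>
    f.continuous.measurable.coe_nnreal_ennreal
  let Λ : C_c(Z, ℝ≥0) →ₗ[ℝ≥0] ℝ≥0 :=
    { toFun := l
      map_add' := fun f g => by
        refine ENNReal.coe_injective (tendsto_nhds_unique (hl (f + g)) ?_)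
        rw [ENNReal.coe_add]
        refine ((hl f).add (hl g)).congr fun n => ?_
        simp [← lintegral_add_left (hmeas f)]
      map_smul' := fun c f => by
        refine ENNReal.coe_injective (tendsto_nhds_unique (hl (c • f)) ?_)
        rw [RingHom.id_apply, smul_eq_mul, ENNReal.coe_mul]
        refine (ENNReal.Tendsto.const_mul (hl f) (Or.inr ENNReal.coe_ne_top)).congr fun n => ?_
        simp [← lintegral_const_mul _ (hmeas f)] }
  refine ⟨NNRealRMK.rieszMeasure Λ, fun f => ?_⟩
  rw [NNRealRMK.lintegral_rieszMeasure]
  exact hl f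

lemma exists_measure_le_lintegral_le [T2Space Z] [LocallyCompactSpace Z] [OpensMeasurableSpace Z]
    {K V : Set Z} (hK : IsCompact K) (hV : IsOpen V) (hKV : K ⊆ V) :
    ∃ f : C_c(Z, ℝ≥0), ∀ ν : Measure Z, ν K ≤ ∫⁻ z, f z ∂ν ∧ ∫⁻ z, f z ∂ν ≤ ν V := by
  obtain ⟨f, hfK, hfcpt, hfV, hf⟩ := exists_continuousMap_one_of_isCompact_subset_isOpen hK hV hKV
  let g : C_c(Z, ℝ≥0) := ⟨⟨fun z => (f z).toNNReal, by fun_prop⟩,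
    HasCompactSupport.comp_left (g := Real.toNNReal) hfcpt Real.toNNReal_zero⟩
  refine ⟨g, fun ν => ⟨?_, ?_⟩⟩
  · rw [← lintegral_indicator_one hK.measurableSet]
    refine lintegral_mono (indicator_le fun z hz => ?_)
    change (1 : ENNReal) ≤ ((f z).toNNReal : ENNReal)
    rw [hfK hz]
    simp
  · rw [← lintegral_indicator_one hV.measurableSet]
    refine lintegral_mono fun z => ?_
    change ((f z).toNNReal : ENNReal) ≤ _
    by_cases hz : z ∈ V
    · rw [indicator_of_mem hz, Pi.one_apply]
      exact_mod_cast Real.toNNReal_le_one.2 (hf z).2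
    · rw [image_eq_zero_of_notMem_tsupport fun hz' => hz (hfV hz')]
      simp

namespace TendstoVaguely

variable [T2Space Z] [LocallyCompactSpace Z] [OpensMeasurableSpace Z] {F : Filter ι} [F.NeBot]
  {ν : ι → Measure Z} {μ : Measure Z} {K K' V V' : Set Z} {c : ENNReal}

lemma measure_le (h : TendstoVaguely F ν μ) (hK : IsCompact K) (hV : IsOpen V) (hKV : K ⊆ V)
    (hc : ∀ᶠ n in F, ν n V ≤ c) : μ K ≤ c := by
  obtain ⟨f, hf⟩ := exists_measure_le_lintegral_le hK hV hKV
  exact (hf μ).1.trans (le_of_tendsto (h f) (hc.mono fun n hn => (hf (ν n)).2.trans hn))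

lemma le_mul_measure (h : TendstoVaguely F ν μ) {k : ENNReal} (hk : k ≠ ⊤) (hK : IsCompact K)
    (hV : IsOpen V) (hKV : K ⊆ V) (hc : ∀ᶠ n in F, c ≤ k * ν n K) : c ≤ k * μ V := by
  obtain ⟨f, hf⟩ := exists_measure_le_lintegral_le hK hV hKV
  refine (ge_of_tendsto (ENNReal.Tendsto.const_mul (h f) (Or.inr hk)) ?_).trans
    (by gcongr; exact (hf μ).2)
  filter_upwards [hc] with n hn
  exact hn.trans (by gcongr; exact (hf (ν n)).1)

lemma measure_le_mul_measure (h : TendstoVaguely F ν μ) (hK : IsCompact K) (hV : IsOpen V)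
    (hKV : K ⊆ V) (hK' : IsCompact K') (hV' : IsOpen V') (hKV' : K' ⊆ V') (hc' : c ≠ ⊤)
    (hc : ∀ᶠ n in F, ν n V ≤ c * ν n K') : μ K ≤ c * μ V' := by
  obtain ⟨f, hf⟩ := exists_measure_le_lintegral_le hK hV hKV
  obtain ⟨g, hg⟩ := exists_measure_le_lintegral_le hK' hV' hKV'
  have hfg : ∫⁻ z, f z ∂μ ≤ c * ∫⁻ z, g z ∂μ := by
    refine le_of_tendsto_of_tendsto (h f) (ENNReal.Tendsto.const_mul (h g) (Or.inr hc')) ?_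
    filter_upwards [hc] with n hn
    exact (hf (ν n)).2.trans (hn.trans (by gcongr; exact (hg (ν n)).1))
  exact (hf μ).1.trans (hfg.trans (by gcongr; exact (hg μ).2))

end TendstoVaguely

end VagueLimit

section HomogeneousLimit

variable {Z : Type*} [MetricSpace Z] [MeasurableSpace Z] {β C r₀ R₀ : ℝ}

lemma HomogeneousBetween.smul {ν : Measure Z} (h : HomogeneousBetween β C r₀ R₀ ν) (c : ENNReal) :
    HomogeneousBetween β C r₀ R₀ (c • ν) := fun x x' r R hr hr₀ hrR hR hx => by
  rw [Measure.smul_apply, Measure.smul_apply, smul_eq_mul, smul_eq_mul, mul_left_comm]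
  gcongr
  exact h x x' r R hr hr₀ hrR hR hx

lemma HomogeneousBetween.ne_top {ν : Measure Z} (h : HomogeneousBetween β C r₀ R₀ ν) {x x' : Z}
    {r R : ℝ} (hr : 0 < r) (hr₀ : r₀ ≤ r) (hrR : r ≤ R) (hR : R ≤ R₀) (hx : dist x x' ≤ R)
    (htop : ν (Metric.ball x' r) ≠ ⊤) : ν (Metric.ball x R) ≠ ⊤ :=
  ne_top_of_le_ne_top (ENNReal.mul_ne_top ENNReal.ofReal_ne_top htop) (h x x' r R hr hr₀ hrR hR hx)

lemma HomogeneousBetween.ne_zero {ν : Measure Z} (h : HomogeneousBetween β C r₀ R₀ ν) {x x' : Z}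
    {r R : ℝ} (hr : 0 < r) (hr₀ : r₀ ≤ r) (hrR : r ≤ R) (hR : R ≤ R₀) (hx : dist x x' ≤ R)
    (hne : ν (Metric.ball x R) ≠ 0) : ν (Metric.ball x' r) ≠ 0 := fun h0 =>
  hne (by simpa [h0] using h x x' r R hr hr₀ hrR hR hx)

lemma HomogeneousBetween.ne_top_of_forall {μ : Measure Z}
    (h : ∀ R, HomogeneousBetween β C 0 R μ) {o : Z} {s : ℝ} (hs : 0 < s)
    (ho : μ (Metric.ball o s) ≠ ⊤) {x : Z} {R : ℝ} : μ (Metric.ball x R) ≠ ⊤ :=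
  ne_top_of_le_ne_top
    ((h _).ne_top (R := max (max R s) (dist x o)) hs hs.le (by simp) le_rfl (le_max_right _ _) ho)
    (measure_mono (Metric.ball_subset_ball (by simp)))

lemma HomogeneousBetween.ne_zero_of_forall {μ : Measure Z}
    (h : ∀ R, HomogeneousBetween β C 0 R μ) {o : Z} {s : ℝ} (ho : μ (Metric.ball o s) ≠ 0)
    {x : Z} {R : ℝ} (hR : 0 < R) : μ (Metric.ball x R) ≠ 0 :=
  (h _).ne_zero (R := max (max R s) (dist o x)) hR hR.le (by simp) le_rfl (le_max_right _ _)
    fun h0 => ho (measure_mono_null (Metric.ball_subset_ball (by simp)) h0)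

lemma TendstoVaguely.homogeneousBetween_zero [LocallyCompactSpace Z] [OpensMeasurableSpace Z]
    {ι : Type*} {F : Filter ι} [F.NeBot] {ν : ι → Measure Z} {μ : Measure Z}
    (h : TendstoVaguely F ν μ)
    (hν : ∀ r > 0, ∀ᶠ n in F, HomogeneousBetween β C r (2 * R₀) (ν n))
    (hcpt : ∀ x : Z, ∀ R ≤ R₀, IsCompact (Metric.closedBall x R)) :
    HomogeneousBetween β (C * 4 ^ β) 0 R₀ μ := by
  intro x x' r R hr _ hrR hR hx
  have hR0 : 0 < R := hr.trans_le hrR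
  have hconst : C * 4 ^ β * (R / r) ^ β = C * ((2 * R) / (r / 2)) ^ β := by
    rw [mul_assoc, ← Real.mul_rpow (by norm_num) (by positivity)]
    congr 2
    field_simp
    norm_num
  rw [hconst]
  refine (measure_mono Metric.ball_subset_closedBall).trans
    (h.measure_le_mul_measure (hcpt x R hR) Metric.isOpen_ball
      (Metric.closedBall_subset_ball (by linarith : R < 2 * R)) (hcpt x' (r / 2) (by linarith))
      Metric.isOpen_ball (Metric.closedBall_subset_ball (half_lt_self hr)) ENNReal.ofReal_ne_top ?_)
  filter_upwards [hν (r / 2) (half_pos hr)] with n hn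
  exact (hn x x' (r / 2) (2 * R) (half_pos hr) le_rfl (by linarith) (by linarith)
    (by linarith)).trans (by gcongr; exact Metric.ball_subset_closedBall)

lemma eventually_hyperfilter_one_div_le {r : ℝ} (hr : 0 < r) :
    ∀ᶠ n : ℕ in hyperfilter ℕ, 1 / ((n : ℝ) + 1) ≤ r :=
  (tendsto_one_div_add_atTop_nhds_zero_nat.mono_left
    Nat.hyperfilter_le_atTop).eventually_le_const hr

lemma eventually_hyperfilter_le_add_one (R : ℝ) :
    ∀ᶠ n : ℕ in hyperfilter ℕ, R ≤ (n : ℝ) + 1 :=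
  Nat.hyperfilter_le_atTop <|
    (tendsto_atTop_add_const_right _ 1 tendsto_natCast_atTop_atTop).eventually_ge_atTop R

variable [BorelSpace Z] {L : ℝ} {N : ℕ}

lemma exists_homogeneousBetween_ball_eq_one (hL : 100 ≤ L) (hβ : 0 < β) (hN : N ≤ L ^ β)
    (hZ : ∀ D, PackingBound Z L N D) (o : Z) :
    ∃ C, 1 ≤ C ∧ ∀ n : ℕ, ∃ ν : Measure Z,
      HomogeneousBetween β C (1 / ((n : ℝ) + 1)) (n + 1) ν ∧ ν (Metric.ball o 1) = 1 := by
  obtain ⟨C, hC, hdiscrete⟩ := exists_homogeneousBetween (Z := Z) hL hβ hN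
  refine ⟨C, hC, fun n => ?_⟩
  have hn : (1 : ℝ) ≤ n + 1 := by linarith [n.cast_nonneg (α := ℝ)]
  have hn' : 1 / ((n : ℝ) + 1) ≤ 1 := (div_le_one (by positivity)).2 hn
  obtain ⟨ν, hν, hmass⟩ := hdiscrete _ _ (by positivity) (hn'.trans hn) (hZ _)
  have h0 : ν (Metric.ball o 1) ≠ 0 :=
    hν.ne_zero (x := o) one_pos hn' hn le_rfl (by rw [dist_self]; positivity) fun h0 => by
      simpa [h0] using (hmass o).2
  have htop : ν (Metric.ball o 1) ≠ ⊤ := ne_top_of_le_ne_top ENNReal.ofReal_ne_top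
    ((measure_mono (Metric.ball_subset_ball hn)).trans (hmass o).1)
  exact ⟨(ν (Metric.ball o 1))⁻¹ • ν, hν.smul _, by
    rw [Measure.smul_apply, smul_eq_mul, ENNReal.inv_mul_cancel h0 htop]⟩

lemma exists_tendstoVaguely_of_homogeneousBetween [LocallyCompactSpace Z] {ι : Type*}
    (U : Ultrafilter ι) {ν : ι → Measure Z}
    (hν : ∀ R, ∀ᶠ n in (U : Filter ι), HomogeneousBetween β C 1 R (ν n)) {o : Z}
    (hone : ∀ n, ν n (Metric.ball o 1) = 1) : ∃ μ : Measure Z, TendstoVaguely U ν μ := by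
  refine exists_tendstoVaguely U fun x => ⟨Metric.ball x 1, Metric.ball_mem_nhds x one_pos,
    ENNReal.ofReal (C * (max 1 (dist x o) / 1) ^ β), ENNReal.ofReal_ne_top,
    (hν (max 1 (dist x o))).mono fun n hn => ?_⟩
  have hball := hn x o 1 _ one_pos le_rfl (le_max_left _ _) le_rfl (le_max_right _ _)
  rw [hone, mul_one] at hball
  exact (measure_mono (Metric.ball_subset_ball (le_max_left _ _))).trans hball

variable [CompleteSpace Z]

lemma PackingBound.exists_homogeneousBetween_zero (hL : 100 ≤ L) (hβ : 0 < β) (hN : N ≤ L ^ β)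
    {T : ℝ} (hT : 0 < T) (hZ : PackingBound Z L N (8 * T)) :
    ∃ C, 1 ≤ C ∧ ∃ μ : Measure Z, HomogeneousBetween β C 0 T μ ∧
      ∀ x, 1 ≤ ENNReal.ofReal C * μ (Metric.ball x T) ∧
        μ (Metric.ball x T) ≤ ENNReal.ofReal C := by
  have hcpt : ∀ x : Z, ∀ R ≤ T, IsCompact (Metric.closedBall x R) := fun x R hR =>
    (hZ.isCompact_closedBall (by linarith) hT (by linarith) x).of_isClosed_subset
      Metric.isClosed_closedBall (Metric.closedBall_subset_closedBall hR)
  have := hZ.locallyCompactSpace (by linarith) (by positivity)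
  obtain ⟨C, hC, hdiscrete⟩ := exists_homogeneousBetween (Z := Z) hL hβ hN
  choose ν hν hmass using fun n : ℕ => hdiscrete (min (1 / ((n : ℝ) + 1)) (2 * T)) (2 * T)
    (by positivity) (min_le_right _ _) (by convert hZ using 1; ring)
  have hhom : ∀ r > 0, ∀ᶠ n in hyperfilter ℕ, HomogeneousBetween β C r (2 * T) (ν n) := fun r hr =>
    (eventually_hyperfilter_one_div_le hr).mono fun n hn =>
      (hν n).mono le_rfl ((min_le_left _ _).trans hn) le_rfl
  obtain ⟨μ, hμ⟩ := exists_tendstoVaguely (hyperfilter ℕ) fun x => ⟨Metric.ball x (2 * T),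
    Metric.ball_mem_nhds x (by positivity), ENNReal.ofReal C, ENNReal.ofReal_ne_top,
    Eventually.of_forall fun n => (hmass n x).1⟩
  have h4 : (1 : ℝ) ≤ 4 ^ β := Real.one_le_rpow (by norm_num) hβ.le
  have hC' : C * 4 ^ β ≤ C * (C * 4 ^ β) := le_mul_of_one_le_left (by positivity) hC
  refine ⟨C * (C * 4 ^ β), by nlinarith, μ,
    (hμ.homogeneousBetween_zero hhom hcpt).mono hC' le_rfl le_rfl, fun x => ⟨?_, ?_⟩⟩
  · refine hμ.le_mul_measure ENNReal.ofReal_ne_top (hcpt x (T / 2) (by linarith))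
      Metric.isOpen_ball (Metric.closedBall_subset_ball (half_lt_self hT)) ?_
    filter_upwards [hhom (T / 2) (half_pos hT)] with n hn
    have hball := hn x x (T / 2) (2 * T) (half_pos hT) le_rfl (by linarith) le_rfl (by simp [hT.le])
    rw [show 2 * T / (T / 2) = 4 by field_simp; norm_num] at hball
    calc 1 ≤ ENNReal.ofReal C * ν n (Metric.ball x (2 * T)) := (hmass n x).2
      _ ≤ ENNReal.ofReal C * (ENNReal.ofReal (C * 4 ^ β) * ν n (Metric.ball x (T / 2))) := by gcongr
      _ = ENNReal.ofReal (C * (C * 4 ^ β)) * ν n (Metric.ball x (T / 2)) := by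
          rw [← mul_assoc, ← ENNReal.ofReal_mul (by positivity)]
      _ ≤ _ := by gcongr; exact Metric.ball_subset_closedBall
  · refine (measure_mono Metric.ball_subset_closedBall).trans (hμ.measure_le (hcpt x T le_rfl)
      Metric.isOpen_ball (Metric.closedBall_subset_ball (by linarith : T < 2 * T))
      (Eventually.of_forall fun n => (hmass n x).1.trans (ENNReal.ofReal_le_ofReal ?_)))
    nlinarith

lemma exists_homogeneousBetween_forall (hL : 100 ≤ L) (hβ : 0 < β) (hN : N ≤ L ^ β)
    (hZ : ∀ D, PackingBound Z L N D) [Nonempty Z] :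
    ∃ C, 1 ≤ C ∧ ∃ μ : Measure Z, (∀ R, HomogeneousBetween β C 0 R μ) ∧
      ∀ x R, 0 < R → μ (Metric.ball x R) ≠ 0 ∧ μ (Metric.ball x R) ≠ ⊤ := by
  obtain ⟨o⟩ := ‹Nonempty Z›
  have hcpt : ∀ (x : Z) R, IsCompact (Metric.closedBall x R) := fun x R =>
    ((hZ (max R 1)).isCompact_closedBall (by linarith) (by positivity) le_rfl x).of_isClosed_subset
      Metric.isClosed_closedBall (Metric.closedBall_subset_closedBall (le_max_left _ _))
  have := (hZ 1).locallyCompactSpace (by linarith) one_pos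
  obtain ⟨C, hC, hdiscrete⟩ := exists_homogeneousBetween_ball_eq_one hL hβ hN hZ o
  choose ν hν hone using hdiscrete
  have hhom : ∀ R, ∀ r > 0, ∀ᶠ n in hyperfilter ℕ, HomogeneousBetween β C r R (ν n) := by
    intro R r hr
    filter_upwards [eventually_hyperfilter_one_div_le hr, eventually_hyperfilter_le_add_one R]
      with n hnr hnR
    exact (hν n).mono le_rfl hnr hnR
  obtain ⟨μ, hμ⟩ := exists_tendstoVaguely_of_homogeneousBetween (hyperfilter ℕ)
    (fun R => hhom R 1 one_pos) hone
  have hμhom : ∀ R, HomogeneousBetween β (C * 4 ^ β) 0 R μ := fun R =>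
    hμ.homogeneousBetween_zero (hhom (2 * R)) fun x R _ => hcpt x R
  have hlower : 1 ≤ 1 * μ (Metric.ball o 2) :=
    hμ.le_mul_measure ENNReal.one_ne_top (hcpt o 1) Metric.isOpen_ball
      (Metric.closedBall_subset_ball one_lt_two) <| Eventually.of_forall fun n => by
        rw [one_mul, ← hone n]
        exact measure_mono Metric.ball_subset_closedBall
  have hupper : μ (Metric.closedBall o (1 / 2)) ≤ 1 :=
    hμ.measure_le (hcpt _ _) Metric.isOpen_ball
      (Metric.closedBall_subset_ball (by norm_num)) (Eventually.of_forall fun n => (hone n).le)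
  have hne : μ (Metric.ball o 2) ≠ 0 := fun h0 => by simp [h0] at hlower
  have hfin : μ (Metric.ball o (1 / 2)) ≠ ⊤ := ne_top_of_le_ne_top ENNReal.one_ne_top
    ((measure_mono Metric.ball_subset_closedBall).trans hupper)
  exact ⟨C * 4 ^ β, one_le_mul_of_one_le_of_one_le hC (Real.one_le_rpow (by norm_num) hβ.le), μ,
    hμhom, fun x R hR => ⟨HomogeneousBetween.ne_zero_of_forall hμhom hne hR,
      HomogeneousBetween.ne_top_of_forall hμhom one_half_pos hfin⟩⟩

end HomogeneousLimit

/-! ### Profiles of homogeneous measures -/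

section MassProfile

/-- A profile `m x R` of the measures of the balls `B(x, R)` of a `β`-homogeneous measure `μ`.
The balls of a bounded space may have infinite measure once `R` is comparable to the diameter, so
`m x R = μ (B(x, R))` is only required at scales that are small relative to the diameter, and from
some scale on `m` may be replaced by its maximum. -/
structure MassProfile {Z : Type*} [MetricSpace Z] [MeasurableSpace Z] (μ : Measure Z)
    (β C q : ℝ) (m : Z → ℝ → ℝ) : Prop where
  one_le : 1 ≤ C
  q_pos : 0 < q
  q_le_one : q ≤ 1
  nonneg : ∀ x R, 0 ≤ m x R
  pos : ∀ x R, 0 < R → 0 < m x R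
  mono : ∀ x, Monotone (m x)
  le_rpow_mul : ∀ x w r R, 0 < r → r ≤ R → dist x w ≤ R → m x R ≤ C * (R / r) ^ β * m w r
  le_mul_measure : ∀ x R, 0 < R → ENNReal.ofReal (m x R) ≤ ENNReal.ofReal C * μ (Metric.ball x R)
  measure_le_or_max : ∀ x R, 0 < R →
    (∃ R' > R, μ (Metric.ball x R') ≤ ENNReal.ofReal (C * m x R)) ∨ ∀ z S, m z S ≤ m x R
  measure_eq : ∀ x R, 0 < R → ∀ a b : Z, R ≤ q * dist a b →
    μ (Metric.ball x R) = ENNReal.ofReal (m x R)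

variable {Z : Type*} [MetricSpace Z] [MeasurableSpace Z] {μ : Measure Z} {β C : ℝ}

lemma HomogeneousBetween.measureReal_le {r₀ R₀ : ℝ} (h : HomogeneousBetween β C r₀ R₀ μ)
    (hC : 0 ≤ C) {x x' : Z} {r R : ℝ} (hr : 0 < r) (hr₀ : r₀ ≤ r) (hrR : r ≤ R) (hR : R ≤ R₀)
    (hx : dist x x' ≤ R) (hfin : μ (Metric.ball x' r) ≠ ⊤) :
    μ.real (Metric.ball x R) ≤ C * (R / r) ^ β * μ.real (Metric.ball x' r) := by
  have hR0 : 0 < R := hr.trans_le hrR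
  rw [Measure.real, ← ENNReal.toReal_ofReal (show 0 ≤ C * (R / r) ^ β by positivity),
    Measure.real, ← ENNReal.toReal_mul]
  exact ENNReal.toReal_mono (ENNReal.mul_ne_top ENNReal.ofReal_ne_top hfin)
    (h x x' r R hr hr₀ hrR hR hx)

lemma massProfile_measureReal_ball (hβ : 0 < β) (hC : 1 ≤ C)
    (hμ : ∀ R, HomogeneousBetween β C 0 R μ)
    (hpos : ∀ x R, 0 < R → μ (Metric.ball x R) ≠ 0 ∧ μ (Metric.ball x R) ≠ ⊤) :
    MassProfile μ β (C * 2 ^ β) 1 fun x R => μ.real (Metric.ball x R) := by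
  have hfin : ∀ x R, μ (Metric.ball x R) ≠ ⊤ := fun x R => by
    rcases le_or_gt R 0 with hR | hR
    · simp [Metric.ball_eq_empty.2 hR]
    · exact (hpos x R hR).2
  have h2 : (1 : ℝ) ≤ 2 ^ β := Real.one_le_rpow one_le_two hβ.le
  have hCK : C ≤ C * 2 ^ β := le_mul_of_one_le_right (by linarith) h2
  have hK : 1 ≤ C * 2 ^ β := hC.trans hCK
  exact {
    one_le := hK
    q_pos := one_pos
    q_le_one := le_rfl
    nonneg := fun _ _ => measureReal_nonneg
    pos := fun x R hR => ENNReal.toReal_pos (hpos x R hR).1 (hfin x R)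
    mono := fun x r R hrR => measureReal_mono (Metric.ball_subset_ball hrR) (hfin x R)
    le_rpow_mul := fun x w r R hr hrR hx => by
      have hR : 0 < R := hr.trans_le hrR
      refine ((hμ R).measureReal_le (by linarith) hr hr.le hrR le_rfl hx (hfin w r)).trans ?_
      gcongr
    le_mul_measure := fun x R _ => by
      rw [ofReal_measureReal (hfin x R)]
      exact le_mul_of_one_le_left' (ENNReal.one_le_ofReal.2 hK)
    measure_le_or_max := fun x R hR => by
      refine Or.inl ⟨2 * R, by linarith, ?_⟩
      rw [← ofReal_measureReal (hfin x (2 * R))]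
      refine ENNReal.ofReal_le_ofReal (((hμ (2 * R)).measureReal_le (by linarith) hR hR.le
        (by linarith) le_rfl (by simp [hR.le]) (hfin x R)).trans_eq ?_)
      rw [mul_div_cancel_right₀ _ hR.ne']
    measure_eq := fun x R _ _ _ _ => (ENNReal.ofReal_toReal (hfin x R)).symm }

open Classical in
/-- The measures of the balls of radius less than `T`, extended by the constant `C`. -/
noncomputable def truncatedMass (μ : Measure Z) (C T : ℝ) (x : Z) (R : ℝ) : ℝ :=
  if R < T then μ.real (Metric.ball x R) else C

lemma truncatedMass_of_lt {T R : ℝ} (h : R < T) (x : Z) :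
    truncatedMass μ C T x R = μ.real (Metric.ball x R) := if_pos h

lemma truncatedMass_of_le {T R : ℝ} (h : T ≤ R) (x : Z) : truncatedMass μ C T x R = C :=
  if_neg h.not_gt

lemma truncatedMass_nonneg (hC : 0 ≤ C) {T : ℝ} (x : Z) (R : ℝ) : 0 ≤ truncatedMass μ C T x R := by
  rw [truncatedMass]
  split_ifs
  exacts [measureReal_nonneg, hC]

section Truncation

variable {T : ℝ} (hβ : 0 < β) (hC : 1 ≤ C) (hT : 0 < T) (hμ : HomogeneousBetween β C 0 T μ)
  (hlow : ∀ x, 1 ≤ ENNReal.ofReal C * μ (Metric.ball x T))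
  (hup : ∀ x, μ (Metric.ball x T) ≤ ENNReal.ofReal C)

include hup in
lemma measure_ball_ne_top_of_le (x : Z) {R : ℝ} (hR : R ≤ T) : μ (Metric.ball x R) ≠ ⊤ :=
  ne_top_of_le_ne_top ENNReal.ofReal_ne_top
    ((measure_mono (Metric.ball_subset_ball hR)).trans (hup x))

include hC hup in
lemma measureReal_ball_le_of_le (x : Z) {R : ℝ} (hR : R ≤ T) : μ.real (Metric.ball x R) ≤ C :=
  ENNReal.toReal_le_of_le_ofReal (by linarith)
    ((measure_mono (Metric.ball_subset_ball hR)).trans (hup x))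

include hμ hlow hup in
lemma measureReal_ball_pos_of_le (x : Z) {R : ℝ} (hR : 0 < R) (hRT : R ≤ T) :
    0 < μ.real (Metric.ball x R) :=
  ENNReal.toReal_pos (hμ.ne_zero (x := x) hR hR.le hRT le_rfl (by simp; linarith) fun h0 => by
    simpa [h0] using hlow x) (measure_ball_ne_top_of_le hup x hRT)

include hβ hC hμ hlow hup in
lemma truncatedMass_le_rpow_mul (x w : Z) {r R : ℝ} (hr : 0 < r) (hrR : r ≤ R)
    (hx : dist x w ≤ R) :
    truncatedMass μ C T x R ≤ C ^ 3 * (R / r) ^ β * truncatedMass μ C T w r := by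
  have hC0 : 0 < C := by linarith
  have hR : 0 < R := hr.trans_le hrR
  have hfin {y : Z} {s : ℝ} (hs : s ≤ T) := measure_ball_ne_top_of_le hup y hs
  rcases lt_or_ge R T with hRT | hRT
  · rw [truncatedMass_of_lt hRT, truncatedMass_of_lt (hrR.trans_lt hRT)]
    refine (hμ.measureReal_le hC0.le hr hr.le hrR hRT.le hx (hfin (hrR.trans hRT.le))).trans ?_
    gcongr
    exact le_self_pow₀ hC three_ne_zero
  rw [truncatedMass_of_le hRT]
  rcases lt_or_ge r T with hrT | hrT
  · have hone : 1 ≤ C * μ.real (Metric.ball w T) := by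
      rw [← ENNReal.toReal_ofReal hC0.le, Measure.real, ← ENNReal.toReal_mul, ← ENNReal.toReal_one]
      exact ENNReal.toReal_mono (ENNReal.mul_ne_top ENNReal.ofReal_ne_top (hfin le_rfl)) (hlow w)
    have hhom := hμ.measureReal_le hC0.le (x := w) (x' := w) hr hr.le hrT.le le_rfl
      (by simp; linarith) (hfin hrT.le)
    rw [truncatedMass_of_lt hrT]
    calc C ≤ C * (C * μ.real (Metric.ball w T)) := le_mul_of_one_le_right hC0.le hone
      _ ≤ C * (C * (C * (R / r) ^ β * μ.real (Metric.ball w r))) := by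
        gcongr
        refine hhom.trans ?_
        have hT : 0 < T := hr.trans hrT
        gcongr
      _ = _ := by ring
  · rw [truncatedMass_of_le hrT]
    exact le_mul_of_one_le_left hC0.le (one_le_mul_of_one_le_of_one_le (one_le_pow₀ hC)
      (Real.one_le_rpow ((one_le_div hr).2 hrR) hβ.le))

include hC hup in
lemma truncatedMass_le (x : Z) (R : ℝ) : truncatedMass μ C T x R ≤ C := by
  rcases lt_or_ge R T with hR | hR
  · exact (truncatedMass_of_lt hR x).trans_le (measureReal_ball_le_of_le hC hup x hR.le)
  · exact (truncatedMass_of_le hR x).le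

include hup in
lemma measure_ball_eq_truncatedMass (x : Z) {R : ℝ} (hR : R < T) :
    μ (Metric.ball x R) = ENNReal.ofReal (truncatedMass μ C T x R) := by
  rw [truncatedMass_of_lt hR, ofReal_measureReal (measure_ball_ne_top_of_le hup x hR.le)]

include hC hup in
lemma truncatedMass_mono (x : Z) : Monotone (truncatedMass μ C T x) := fun r R hrR => by
  rcases lt_or_ge R T with hR | hR
  · rw [truncatedMass_of_lt hR, truncatedMass_of_lt (hrR.trans_lt hR)]
    exact measureReal_mono (Metric.ball_subset_ball hrR) (measure_ball_ne_top_of_le hup x hR.le)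
  · exact (truncatedMass_le hC hup x r).trans_eq (truncatedMass_of_le hR x).symm

include hC hμ hlow hup in
lemma truncatedMass_pos (x : Z) {R : ℝ} (hR : 0 < R) : 0 < truncatedMass μ C T x R := by
  rcases lt_or_ge R T with hRT | hRT
  · exact (measureReal_ball_pos_of_le hμ hlow hup x hR hRT.le).trans_eq
      (truncatedMass_of_lt hRT x).symm
  · exact (one_pos.trans_le hC).trans_eq (truncatedMass_of_le hRT x).symm

include hC hlow hup in
lemma truncatedMass_le_mul_measure (x : Z) (R : ℝ) :
    ENNReal.ofReal (truncatedMass μ C T x R) ≤ ENNReal.ofReal (C ^ 2) * μ (Metric.ball x R) := by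
  rcases lt_or_ge R T with hR | hR
  · rw [← measure_ball_eq_truncatedMass hup x hR]
    exact le_mul_of_one_le_left' (ENNReal.one_le_ofReal.2 (one_le_pow₀ hC))
  · rw [truncatedMass_of_le hR]
    calc ENNReal.ofReal C ≤ ENNReal.ofReal C * (ENNReal.ofReal C * μ (Metric.ball x T)) :=
          le_mul_of_one_le_right' (hlow x)
      _ = ENNReal.ofReal (C ^ 2) * μ (Metric.ball x T) := by
          rw [← mul_assoc, ← ENNReal.ofReal_mul (by linarith), sq]
      _ ≤ _ := by gcongr

include hβ hC hμ hup in
lemma exists_measure_ball_le_truncatedMass (x : Z) {R : ℝ} (hR : 0 < R) (hRT : R < T) :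
    ∃ R' > R, μ (Metric.ball x R') ≤ ENNReal.ofReal (C * 2 ^ β * truncatedMass μ C T x R) := by
  have hfin {r : ℝ} (hr : r ≤ T) := measure_ball_ne_top_of_le hup x hr
  have hlt : R < min T (2 * R) := lt_min hRT (by linarith)
  refine ⟨min T (2 * R), hlt, ?_⟩
  rw [← ofReal_measureReal (hfin (min_le_left _ _)), truncatedMass_of_lt hRT]
  refine ENNReal.ofReal_le_ofReal ((hμ.measureReal_le (by linarith) hR hR.le hlt.le
    (min_le_left _ _) (by simpa using hR.le.trans hlt.le) (hfin hRT.le)).trans ?_)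
  have hratio : min T (2 * R) / R ≤ 2 := (div_le_iff₀ hR).2 (min_le_right _ _)
  have hmin : 0 ≤ min T (2 * R) / R := div_nonneg (hR.le.trans hlt.le) hR.le
  gcongr

include hβ hC hT hμ hlow hup in
lemma massProfile_truncatedMass {D : ℝ} (hD : 0 ≤ D) (hdist : ∀ a b : Z, dist a b ≤ D) :
    MassProfile μ β (C ^ 3 * 2 ^ β) (T / (D + T)) (truncatedMass μ C T) := by
  have h2 : (1 : ℝ) ≤ 2 ^ β := Real.one_le_rpow one_le_two hβ.le
  have hC3 : 1 ≤ C ^ 3 := one_le_pow₀ hC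
  have hCK : C ^ 3 ≤ C ^ 3 * 2 ^ β := le_mul_of_one_le_right (by linarith) h2
  have hpos {x : Z} {R : ℝ} (hR : 0 < R) := truncatedMass_pos hC hμ hlow hup x hR
  exact {
    one_le := hC3.trans hCK
    q_pos := by positivity
    q_le_one := (div_le_one (by positivity)).2 (by linarith)
    nonneg := truncatedMass_nonneg (by linarith)
    pos := fun x R => hpos
    mono := truncatedMass_mono hC hup
    le_rpow_mul := fun x w r R hr hrR hx => by
      have hR : 0 < R := hr.trans_le hrR
      have := (hpos (x := w) hr).le
      exact (truncatedMass_le_rpow_mul hβ hC hμ hlow hup x w hr hrR hx).trans (by gcongr)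
    le_mul_measure := fun x R _ => by
      refine (truncatedMass_le_mul_measure hC hlow hup x R).trans ?_
      gcongr
      exact (pow_le_pow_right₀ hC (by norm_num)).trans hCK
    measure_le_or_max := fun x R hR => by
      rcases lt_or_ge R T with hRT | hRT
      · obtain ⟨R', hR', hle⟩ := exists_measure_ball_le_truncatedMass hβ hC hμ hup x hR hRT
        have := hpos (x := x) hR
        refine Or.inl ⟨R', hR', hle.trans ?_⟩
        gcongr
        exact le_self_pow₀ hC three_ne_zero
      · exact Or.inr fun z S => (truncatedMass_le hC hup z S).trans_eq
          (truncatedMass_of_le hRT x).symm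
    measure_eq := fun x R _ a b hab => by
      refine measure_ball_eq_truncatedMass hup x ?_
      calc R ≤ T / (D + T) * D := hab.trans (by gcongr; exact hdist a b)
        _ < T := by
          rw [div_mul_eq_mul_div, div_lt_iff₀ (by positivity)]
          nlinarith }

end Truncation

lemma PackingBound.exists_massProfile [BorelSpace Z] [CompleteSpace Z] [Nontrivial Z] {L : ℝ}
    {N : ℕ} (hL : 100 ≤ L) (hβ : 0 < β) (hN : N ≤ L ^ β)
    (hZ : ∀ a b : Z, PackingBound Z L N (dist a b / 8)) :
    ∃ (μ : Measure Z) (C q : ℝ) (m : Z → ℝ → ℝ), MassProfile μ β C q m := by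
  by_cases hbdd : ∃ D, ∀ a b : Z, dist a b ≤ D
  · obtain ⟨D, hD⟩ := hbdd
    obtain ⟨a, b, hab⟩ := exists_pair_ne Z
    have hab0 : 0 < dist a b := dist_pos.2 hab
    obtain ⟨C, hC, μ, hμ, hT⟩ := PackingBound.exists_homogeneousBetween_zero hL hβ hN
      (T := dist a b / 64) (by positivity) (by convert hZ a b using 1; ring)
    exact ⟨μ, _, _, _, massProfile_truncatedMass hβ hC (by positivity) hμ (fun x => (hT x).1)
      (fun x => (hT x).2) (hab0.le.trans (hD a b)) hD⟩
  · push Not at hbdd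
    obtain ⟨C, hC, μ, hμ, hpos⟩ := exists_homogeneousBetween_forall hL hβ hN fun D R hR hRD => by
      obtain ⟨a, b, hab⟩ := hbdd (8 * D)
      exact hZ a b R hR (by linarith)
    exact ⟨μ, _, _, _, massProfile_measureReal_ball hβ hC hμ hpos⟩

end MassProfile

/-! ### Deformation of a metric by a gauge -/

section Gauge

/-- A gauge assigns to every ball `B(x, R)` a new diameter `φ x R`, which grows at most linearly in
`R` and is the same, up to a constant factor, for nearby balls of the same radius. -/
structure Gauge {Z : Type*} [MetricSpace Z] (φ : Z → ℝ → ℝ) (A : ℝ) : Prop where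
  one_le : 1 ≤ A
  pos : ∀ x R, 0 < R → 0 < φ x R
  mono : ∀ x, Monotone (φ x)
  le_mul : ∀ x w r R, 0 < r → r ≤ R → dist x w ≤ R → φ x R ≤ A * (R / r) * φ w r

/-- `φ x R` decays at least as fast as a power of `R`, as long as `R` does not exceed the distance
from `x` to the farthest points of the space. -/
def ReverseDoubling {Z : Type*} [MetricSpace Z] (φ : Z → ℝ → ℝ) : Prop :=
  ∃ A ≥ (1 : ℝ), ∃ a > (0 : ℝ), ∀ x z r R, 0 < r → r ≤ R → R ≤ dist x z →
    φ x r ≤ A * (r / R) ^ a * φ x R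

/-- The distance in which points at distance `R` near `x` are about `φ x R` apart: the supremum
over all balls `B(z, R)` of the pullbacks of the metric of `ℝ` under the functions
`φ z R * min 1 (dist z · / R)`. -/
noncomputable def deformedDist {Z : Type*} [MetricSpace Z] (φ : Z → ℝ → ℝ) (x y : Z) : ℝ :=
  ⨆ p : Z × Ioi (0 : ℝ), φ p.1 p.2 * |min 1 (dist p.1 x / p.2) - min 1 (dist p.1 y / p.2)|

variable {Z : Type*} [MetricSpace Z] {φ : Z → ℝ → ℝ} {A : ℝ} {x y z : Z} {R : ℝ}

lemma abs_min_one_sub_min_one_le_one {s t : ℝ} (hs : 0 ≤ s) (ht : 0 ≤ t) :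
    |min 1 s - min 1 t| ≤ 1 :=
  abs_sub_le_of_nonneg_of_le (le_min zero_le_one hs) (min_le_left _ _) (le_min zero_le_one ht)
    (min_le_left _ _)

lemma abs_min_one_dist_div_sub_le (hR : 0 < R) (x y z : Z) :
    |min 1 (dist z x / R) - min 1 (dist z y / R)| ≤ dist x y / R := by
  refine (abs_min_sub_min_le_max 1 (dist z x / R) 1 (dist z y / R)).trans ?_
  rw [sub_self, abs_zero, max_eq_right (abs_nonneg _), ← sub_div, abs_div, abs_of_pos hR]
  gcongr
  rw [dist_comm z x, dist_comm z y]
  exact abs_dist_sub_le x y z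

namespace Gauge

variable (h : Gauge φ A)
include h

lemma le_mul_of_dist_le (hR : 0 < R) (hxy : dist x y ≤ R) : φ x R ≤ A * φ y R := by
  simpa [hR.ne'] using h.le_mul x y R R hR le_rfl hxy

lemma bump_le_of_dist_lt (hxy : x ≠ y) (hR : 0 < R) (hzx : dist z x < R) :
    φ z R * |min 1 (dist z x / R) - min 1 (dist z y / R)| ≤ A * φ x (dist x y) := by
  have hd : 0 < dist x y := dist_pos.2 hxy
  have hφ := (h.pos z R hR).le
  rcases le_total (dist x y) R with hle | hle
  · calc φ z R * |min 1 (dist z x / R) - min 1 (dist z y / R)|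
        ≤ A * (R / dist x y) * φ x (dist x y) * (dist x y / R) := by
          gcongr
          · exact hφ.trans (h.le_mul z x _ R hd hle hzx.le)
          · exact h.le_mul z x _ R hd hle hzx.le
          · exact abs_min_one_dist_div_sub_le hR x y z
      _ = A * φ x (dist x y) := by field_simp
  · calc φ z R * |min 1 (dist z x / R) - min 1 (dist z y / R)|
        ≤ φ z R := mul_le_of_le_one_right hφ
          (abs_min_one_sub_min_one_le_one (by positivity) (by positivity))
      _ ≤ φ z (dist x y) := h.mono z hle
      _ ≤ A * φ x (dist x y) := h.le_mul_of_dist_le hd (hzx.le.trans hle)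

lemma bump_le (hxy : x ≠ y) (hR : 0 < R) :
    φ z R * |min 1 (dist z x / R) - min 1 (dist z y / R)| ≤ A ^ 2 * φ x (dist x y) := by
  have hd : 0 < dist x y := dist_pos.2 hxy
  have hφ := h.pos x _ hd
  have hA := h.one_le
  by_cases hzx : dist z x < R
  · refine (h.bump_le_of_dist_lt hxy hR hzx).trans ?_
    gcongr
    exact le_self_pow₀ hA two_ne_zero
  by_cases hzy : dist z y < R
  · rw [abs_sub_comm]
    calc _ ≤ A * φ y (dist y x) := h.bump_le_of_dist_lt hxy.symm hR hzy
      _ = A * φ y (dist x y) := by rw [dist_comm y x]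
      _ ≤ A * (A * φ x (dist x y)) := by
        gcongr
        exact h.le_mul_of_dist_le hd (dist_comm y x).le
      _ = A ^ 2 * φ x (dist x y) := by ring
  · rw [min_eq_left ((one_le_div hR).2 (not_lt.1 hzx)),
      min_eq_left ((one_le_div hR).2 (not_lt.1 hzy)), sub_self, abs_zero, mul_zero]
    positivity

lemma bddAbove_bump (x y : Z) : BddAbove (range fun p : Z × Ioi (0 : ℝ) =>
    φ p.1 p.2 * |min 1 (dist p.1 x / p.2) - min 1 (dist p.1 y / p.2)|) := by
  rcases eq_or_ne x y with rfl | hxy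
  · exact ⟨0, by rintro _ ⟨p, rfl⟩; simp⟩
  · exact ⟨_, forall_mem_range.2 fun p => h.bump_le hxy p.2.2⟩

lemma le_deformedDist (hxy : x ≠ y) : φ x (dist x y) ≤ deformedDist φ x y := by
  have hd : 0 < dist x y := dist_pos.2 hxy
  refine le_trans ?_ (le_ciSup (h.bddAbove_bump x y) (x, ⟨dist x y, hd⟩))
  simp [hd.ne']

lemma deformedDist_le (hxy : x ≠ y) : deformedDist φ x y ≤ A ^ 2 * φ x (dist x y) :=
  Real.iSup_le (fun p => h.bump_le hxy p.2.2)
    (mul_nonneg (sq_nonneg A) (h.pos x _ (dist_pos.2 hxy)).le)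

lemma deformedDist_le_of_forall_le {M : ℝ} (hM : ∀ z R, φ z R ≤ M) : deformedDist φ x y ≤ M := by
  have hM0 : 0 ≤ M := (h.pos x 1 one_pos).le.trans (hM x 1)
  refine Real.iSup_le (fun p => ?_) hM0
  have hp : (0 : ℝ) < p.2 := p.2.2
  exact (mul_le_of_le_one_right (h.pos p.1 _ hp).le
    (abs_min_one_sub_min_one_le_one (by positivity) (by positivity))).trans (hM _ _)

lemma deformedDist_triangle (x y z : Z) :
    deformedDist φ x z ≤ deformedDist φ x y + deformedDist φ y z := by
  have : Nonempty (Z × Ioi (0 : ℝ)) := ⟨(x, ⟨1, one_pos (α := ℝ)⟩)⟩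
  refine ciSup_le fun p => le_trans ?_
    (add_le_add (le_ciSup (h.bddAbove_bump x y) p) (le_ciSup (h.bddAbove_bump y z) p))
  rw [← mul_add]
  have := (h.pos p.1 p.2 p.2.2).le
  gcongr
  exact abs_sub_le _ _ _

end Gauge

lemma deformedDist_self (φ : Z → ℝ → ℝ) (x : Z) : deformedDist φ x x = 0 := by
  simp [deformedDist]

lemma deformedDist_comm (φ : Z → ℝ → ℝ) (x y : Z) : deformedDist φ x y = deformedDist φ y x := by
  simp only [deformedDist, abs_sub_comm]

/-- `e : Z ≃ W` transports `Z` to a space in which the distance of `x` and `y` is comparable to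
`φ x (dist x y)` and in which no distance exceeds every value of `φ`. -/
structure IsDeformation {W : Type*} [MetricSpace W] (φ : Z → ℝ → ℝ) (A : ℝ) (e : Z ≃ W) :
    Prop where
  le_dist : ∀ x y, x ≠ y → φ x (dist x y) ≤ dist (e x) (e y)
  dist_le : ∀ x y, x ≠ y → dist (e x) (e y) ≤ A * φ x (dist x y)
  dist_le_of_forall_le : ∀ M, (∀ z R, φ z R ≤ M) → ∀ x y, dist (e x) (e y) ≤ M

/-- The metric space on the points of `Z` with the deformed distance of a gauge. -/
@[reducible]
noncomputable def Gauge.metricSpace (h : Gauge φ A) : MetricSpace Z where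
  dist := deformedDist φ
  dist_self := deformedDist_self φ
  dist_comm := deformedDist_comm φ
  dist_triangle := h.deformedDist_triangle
  eq_of_dist_eq_zero := fun {x y} hxy => by
    by_contra hne
    exact ((h.pos x _ (dist_pos.2 hne)).trans_le (h.le_deformedDist hne)).ne' hxy

lemma Gauge.exists_isDeformation {Z : Type u} [MetricSpace Z] {φ : Z → ℝ → ℝ} {A : ℝ}
    (h : Gauge φ A) :
    ∃ (W : Type u) (_ : MetricSpace W) (e : Z ≃ W), IsDeformation φ (A ^ 2) e :=
  ⟨Z, h.metricSpace, Equiv.refl Z, @IsDeformation.mk Z _ Z h.metricSpace φ (A ^ 2) (Equiv.refl Z)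
    (fun _ _ => h.le_deformedDist) (fun _ _ => h.deformedDist_le)
    (fun _ hM _ _ => h.deformedDist_le_of_forall_le hM)⟩

end Gauge

section Quasisymmetry

lemma exists_homeomorph_eq_mul_add_rpow {B a : ℝ≥0} (hB : 0 < B) (ha : 0 < a) :
    ∃ η : ℝ≥0 ≃ₜ ℝ≥0, ∀ t, η t = B * (t + t ^ (a : ℝ)) := by
  have ha' : (0 : ℝ) < a := ha
  have hmono : StrictMono fun t : ℝ≥0 => B * (t + t ^ (a : ℝ)) := fun s t hst =>
    mul_lt_mul_of_pos_left (add_lt_add_of_lt_of_le hst (NNReal.rpow_le_rpow hst.le ha'.le)) hB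
  have hcont : Continuous fun t : ℝ≥0 => B * (t + t ^ (a : ℝ)) := by
    have := NNReal.continuous_rpow_const ha'.le
    fun_prop
  have hsurj : Function.Surjective fun t : ℝ≥0 => B * (t + t ^ (a : ℝ)) := by
    refine hcont.surjective (tendsto_atTop_mono (f := fun t => B * t) (fun t => ?_)
      (tendsto_id.const_mul_atTop hB)) ?_
    · gcongr
      exact le_self_add
    · rw [OrderBot.atBot_eq, tendsto_pure_left]
      intro s hs
      simpa [NNReal.zero_rpow ha'.ne'] using mem_pure.1 hs
  exact ⟨(hmono.orderIsoOfSurjective _ hsurj).toHomeomorph, fun _ => rfl⟩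

lemma isQuasisymmetric_of_le_mul_add_rpow {X Y : Type*} [MetricSpace X] [MetricSpace Y]
    {f : X → Y} {B a : ℝ} (hB : 0 < B) (ha : 0 < a)
    (h : ∀ x y z, x ≠ y → x ≠ z → dist (f x) (f y) ≤
      B * (dist x y / dist x z + (dist x y / dist x z) ^ a) * dist (f x) (f z)) :
    IsQuasisymmetric f := by
  lift B to ℝ≥0 using hB.le
  lift a to ℝ≥0 using ha.le
  obtain ⟨η, hη⟩ := exists_homeomorph_eq_mul_add_rpow (B := B) (a := a) (mod_cast hB) (mod_cast ha)
  refine ⟨η, fun x y z t hxyz => ?_⟩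
  replace hxyz : dist x y ≤ t * dist x z := mod_cast hxyz
  rw [hη, ← NNReal.coe_le_coe]
  push_cast
  rcases eq_or_ne x y with rfl | hxy
  · rw [dist_self]
    positivity
  have hxz : x ≠ z := by
    rintro rfl
    rw [dist_self, mul_zero] at hxyz
    exact hxy (dist_le_zero.1 hxyz)
  refine (h x y z hxy hxz).trans ?_
  have hratio : dist x y / dist x z ≤ t := (div_le_iff₀ (dist_pos.2 hxz)).2 hxyz
  gcongr

lemma IsDeformation.isQuasisymmetric {Z W : Type*} [MetricSpace Z] [MetricSpace W] {e : Z ≃ W}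
    {φ : Z → ℝ → ℝ} {A A' : ℝ} (he : IsDeformation φ A' e) (hA' : 0 < A') (hφ : Gauge φ A)
    (hrev : ReverseDoubling φ) : IsQuasisymmetric e := by
  obtain ⟨K, hK, a, ha, hrev⟩ := hrev
  have hA := hφ.one_le
  refine isQuasisymmetric_of_le_mul_add_rpow (B := A' * (A * K)) (a := a) (by positivity)
    ha fun x y z hxy hxz => ?_
  have hdxy : 0 < dist x y := dist_pos.2 hxy
  have hdxz : 0 < dist x z := dist_pos.2 hxz
  have hφz := hφ.pos x _ hdxz
  have hratio : φ x (dist x y) ≤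
      A * K * (dist x y / dist x z + (dist x y / dist x z) ^ a) * φ x (dist x z) := by
    rcases le_total (dist x y) (dist x z) with hle | hle
    · refine (hrev x z _ _ hdxy hle le_rfl).trans ?_
      gcongr
      · exact le_mul_of_one_le_left (by linarith) hA
      · exact le_add_of_nonneg_left (by positivity)
    · refine (hφ.le_mul x x _ _ hdxz hle (by simp)).trans ?_
      gcongr
      · exact le_mul_of_one_le_right (by linarith) hK
      · exact le_add_of_nonneg_right (by positivity)
  calc dist (e x) (e y) ≤ A' * φ x (dist x y) := he.dist_le x y hxy
    _ ≤ A' * (A * K * (dist x y / dist x z + (dist x y / dist x z) ^ a) * φ x (dist x z)) := by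
      gcongr
    _ ≤ A' * (A * K * (dist x y / dist x z + (dist x y / dist x z) ^ a) * dist (e x) (e z)) := by
      gcongr
      exact he.le_dist x z hxz
    _ = _ := by ring

end Quasisymmetry

/-! ### Regularity of the deformed space -/

section GaugeOfMassProfile

variable {Z : Type*} [MetricSpace Z] {f : Z → ℝ → ℝ}

lemma pow_mul_le_of_forall_mul_le {s θ : ℝ} (hs : s ∈ Ioo 0 1) (hθ : 0 ≤ θ)
    (h : ∀ x z R, 0 < R → R ≤ dist x z → f x (s * R) ≤ θ * f x R) {x z : Z} {R : ℝ} (hR : 0 < R)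
    (hRz : R ≤ dist x z) (n : ℕ) : f x (s ^ n * R) ≤ θ ^ n * f x R := by
  have hs0 := hs.1
  induction n with
  | zero => simp
  | succ n ih =>
    have hle : s ^ n * R ≤ dist x z :=
      (mul_le_of_le_one_left hR.le (pow_le_one₀ hs0.le hs.2.le)).trans hRz
    calc f x (s ^ (n + 1) * R) = f x (s * (s ^ n * R)) := by ring_nf
      _ ≤ θ * f x (s ^ n * R) := h x z _ (by positivity) hle
      _ ≤ θ * (θ ^ n * f x R) := by gcongr
      _ = θ ^ (n + 1) * f x R := by ring

lemma ReverseDoubling.of_forall_mul_le (hf : ∀ x R, 0 ≤ f x R) (hmono : ∀ x, Monotone (f x))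
    {s θ : ℝ} (hs : s ∈ Ioo 0 1) (hθ : θ ∈ Ioo 0 1)
    (h : ∀ x z R, 0 < R → R ≤ dist x z → f x (s * R) ≤ θ * f x R) : ReverseDoubling f := by
  obtain ⟨hs0, hs1⟩ := hs
  have hb := Real.logb_pos_of_base_lt_one hs0 hs1 hθ.1 hθ.2
  have hsb : s ^ Real.logb s θ = θ := Real.rpow_logb hs0 hs1.ne hθ.1
  refine ⟨s⁻¹ ^ Real.logb s θ, Real.one_le_rpow ((one_le_inv₀ hs0).2 hs1.le) hb.le, _, hb,
    fun x z r R hr hrR hRz => ?_⟩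
  have hR : 0 < R := hr.trans_le hrR
  obtain ⟨n, hn, hn'⟩ := exists_nat_pow_near_of_lt_one (div_pos hr hR) ((div_le_one hR).2 hrR)
    hs0 hs1
  have hθn : θ ^ n ≤ s⁻¹ ^ Real.logb s θ * (r / R) ^ Real.logb s θ := by
    rw [← Real.mul_rpow (by positivity) (by positivity)]
    nth_rw 1 [← hsb]
    rw [Real.rpow_pow_comm hs0.le]
    gcongr
    rw [inv_mul_eq_div, le_div_iff₀ hs0, ← pow_succ]
    exact hn.le
  calc f x r ≤ f x (s ^ n * R) := hmono x ((div_le_iff₀ hR).1 hn')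
    _ ≤ θ ^ n * f x R := pow_mul_le_of_forall_mul_le ⟨hs0, hs1⟩ hθ.1.le h hR hRz n
    _ ≤ _ := by
      have := hf x R
      gcongr

lemma ReverseDoubling.rpow (hf : ReverseDoubling f) (hf0 : ∀ x R, 0 ≤ f x R) {p : ℝ}
    (hp : 0 < p) : ReverseDoubling fun x R => f x R ^ p := by
  obtain ⟨A, hA, a, ha, hf⟩ := hf
  refine ⟨A ^ p, Real.one_le_rpow hA hp.le, a * p, mul_pos ha hp, fun x z r R hr hrR hRz => ?_⟩
  have hR : 0 < R := hr.trans_le hrR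
  calc f x r ^ p ≤ (A * (r / R) ^ a * f x R) ^ p :=
        Real.rpow_le_rpow (hf0 x r) (hf x z r R hr hrR hRz) hp.le
    _ = A ^ p * (r / R) ^ (a * p) * f x R ^ p := by
      rw [Real.mul_rpow (by positivity) (hf0 x R), Real.mul_rpow (by positivity) (by positivity),
        ← Real.rpow_mul (by positivity)]

namespace MassProfile

variable [MeasurableSpace Z] {μ : Measure Z} {β C q : ℝ} {m : Z → ℝ → ℝ}

lemma gauge (h : MassProfile μ β C q m) (hβ : 0 < β) :
    Gauge (fun x R => m x R ^ β⁻¹) (C ^ β⁻¹) where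
  one_le := Real.one_le_rpow h.one_le (by positivity)
  pos x R hR := Real.rpow_pos_of_pos (h.pos x R hR) _
  mono x _ _ hrR := Real.rpow_le_rpow (h.nonneg x _) (h.mono x hrR) (by positivity)
  le_mul x w r R hr hrR hxw := by
    have hR : 0 < R := hr.trans_le hrR
    have hC : 0 < C := one_pos.trans_le h.one_le
    calc m x R ^ β⁻¹ ≤ (C * (R / r) ^ β * m w r) ^ β⁻¹ :=
          Real.rpow_le_rpow (h.nonneg x R) (h.le_rpow_mul x w r R hr hrR hxw) (by positivity)
      _ = C ^ β⁻¹ * (R / r) * m w r ^ β⁻¹ := by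
        rw [Real.mul_rpow (by positivity) (h.nonneg w r), Real.mul_rpow hC.le (by positivity),
          Real.rpow_rpow_inv (by positivity) hβ.ne']

variable [OpensMeasurableSpace Z]

lemma add_le_of_disjoint (h : MassProfile μ β C q m) {x y a b : Z} {r R : ℝ} (hr : 0 < r)
    (hrR : r ≤ R) (hxy : r + r ≤ dist x y) (hyR : r + dist x y ≤ R) (hR : R ≤ q * dist a b) :
    m x r + m y r ≤ m x R := by
  have hdisj : Disjoint (Metric.ball x r) (Metric.ball y r) := Metric.ball_disjoint_ball hxy
  have hle : μ (Metric.ball x r) + μ (Metric.ball y r) ≤ μ (Metric.ball x R) := by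
    rw [← measure_union hdisj Metric.isOpen_ball.measurableSet]
    exact measure_mono (union_subset (Metric.ball_subset_ball hrR)
      (Metric.ball_subset_ball' (by rwa [dist_comm])))
  rwa [h.measure_eq x r hr a b (hrR.trans hR), h.measure_eq y r hr a b (hrR.trans hR),
    h.measure_eq x R (hr.trans_le hrR) a b hR, ← ENNReal.ofReal_add (h.nonneg x r) (h.nonneg y r),
    ENNReal.ofReal_le_ofReal_iff (h.nonneg x R)] at hle

lemma exists_forall_mul_le (h : MassProfile μ β C q m) (hZ : UniformlyPerfect Z) :
    ∃ s ∈ Ioo (0 : ℝ) 1, ∃ θ ∈ Ioo (0 : ℝ) 1, ∀ x z R, 0 < R → R ≤ dist x z →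
      m x (s * R) ≤ θ * m x R := by
  obtain ⟨c', hc', hZ⟩ := hZ
  obtain ⟨c, hc, hc2, hcc'⟩ : ∃ c > 0, c ≤ 1 / 2 ∧ c ≤ c' :=
    ⟨min c' (1 / 2), by positivity, min_le_right _ _, min_le_left _ _⟩
  have hq := h.q_pos
  have hq1 := h.q_le_one
  set s := c * q / 2 with hs
  set K := max (C * s⁻¹ ^ β) 2
  have hs0 : 0 < s := by positivity
  have hs1 : s < 1 := by nlinarith
  have hK : 2 ≤ K := le_max_right _ _
  refine ⟨s, ⟨hs0, hs1⟩, 1 - K⁻¹, ⟨sub_pos.2 (inv_lt_one_of_one_lt₀ (by linarith)),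
    sub_lt_self _ (by positivity)⟩, fun x z R hR hRz => ?_⟩
  have hqR : q * R ≤ R := mul_le_of_le_one_left hR.le hq1
  obtain ⟨y, hcy, hyR⟩ := hZ x z (q * R) (by positivity) (hqR.trans hRz)
  replace hcy : c * (q * R) ≤ dist x y := le_trans (by gcongr) hcy
  have hsR : s * R = c * (q * R) / 2 := by rw [hs]; ring
  have hsR' : s * R ≤ q * R / 2 := by rw [hsR]; nlinarith [mul_pos hq hR]
  have hadd : m x (s * R) + m y (s * R) ≤ m x (q * R) :=
    h.add_le_of_disjoint (a := x) (b := z) (by positivity) (by linarith [mul_pos hq hR])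
      (by linarith) (by linarith) (by gcongr)
  have hKy : m x R ≤ K * m y (s * R) := by
    refine (h.le_rpow_mul x y (s * R) R (by positivity)
      (mul_le_of_le_one_left hR.le hs1.le) (by linarith)).trans ?_
    have := h.nonneg y (s * R)
    rw [div_mul_cancel_right₀ hR.ne']
    gcongr
    exact le_max_left _ _
  rw [← inv_mul_le_iff₀ (by positivity)] at hKy
  linarith [h.mono x hqR]

lemma reverseDoubling (h : MassProfile μ β C q m) (hZ : UniformlyPerfect Z) :
    ReverseDoubling m := by
  obtain ⟨s, hs, θ, hθ, hm⟩ := h.exists_forall_mul_le hZ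
  exact .of_forall_mul_le h.nonneg h.mono hs hθ hm

end MassProfile

end GaugeOfMassProfile

section Regularity

lemma exists_div_four_le_dist {W : Type*} [MetricSpace W] {r : ℝ} (hr : 0 < r)
    (hrW : ENNReal.ofReal r ≤ Metric.ediam (univ : Set W)) (x : W) : ∃ z, r / 4 ≤ dist x z := by
  by_contra! hlt
  refine hrW.not_gt (lt_of_le_of_lt (Metric.ediam_le (d := ENNReal.ofReal (r / 2)) ?_)
    ((ENNReal.ofReal_lt_ofReal_iff hr).2 (half_lt_self hr)))
  intro y _ z _
  rw [edist_dist]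
  gcongr
  linarith [dist_triangle_left y z x, hlt y, hlt z]

variable {Z : Type*} [MetricSpace Z]

lemma measure_le_of_forall_exists_ball [MeasurableSpace Z] {μ : Measure Z} {E : Set Z} {x : Z}
    {K : ENNReal} (h : ∀ y ∈ E, ∃ R, dist y x < R ∧ μ (Metric.ball x R) ≤ K) : μ E ≤ K := by
  let ι := {q : ℚ // μ (Metric.ball x q) ≤ K}
  have hsub : E ⊆ ⋃ q : ι, Metric.ball x (q : ℚ) := fun y hy => by
    obtain ⟨R, hyR, hR⟩ := h y hy
    obtain ⟨q, hyq, hqR⟩ := exists_rat_btwn hyR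
    exact mem_iUnion.2 ⟨⟨q, (measure_mono (Metric.ball_subset_ball hqR.le)).trans hR⟩, hyq⟩
  have hmono : Monotone fun q : ι => Metric.ball x ((q : ℚ) : ℝ) := fun p q hpq =>
    Metric.ball_subset_ball (by exact_mod_cast hpq)
  calc μ E ≤ μ (⋃ q : ι, Metric.ball x (q : ℚ)) := measure_mono hsub
    _ = ⨆ q : ι, μ (Metric.ball x (q : ℚ)) := hmono.directed_le.measure_iUnion
    _ ≤ K := iSup_le fun q => q.2

variable {W : Type*} [MetricSpace W] {e : Z ≃ W} {φ : Z → ℝ → ℝ} {A A' : ℝ}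

lemma ReverseDoubling.exists_lt (hφ : ReverseDoubling φ) {x z : Z} (hxz : x ≠ z) {ε : ℝ}
    (hε : 0 < ε) : ∃ n : ℕ, φ x (dist x z / 2 ^ n) < ε := by
  obtain ⟨K, -, a, ha, hφ⟩ := hφ
  have hd : 0 < dist x z := dist_pos.2 hxz
  have hlim : Tendsto (fun n : ℕ => K * ((1 / 2 : ℝ) ^ n) ^ a * φ x (dist x z)) atTop (𝓝 0) := by
    have hpow := (tendsto_pow_atTop_nhds_zero_of_lt_one (r := (1 / 2 : ℝ)) (by norm_num)
      (by norm_num)).rpow_const (p := a) (Or.inr ha.le)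
    rw [Real.zero_rpow ha.ne'] at hpow
    simpa using (hpow.const_mul K).mul_const (φ x (dist x z))
  obtain ⟨n, hn⟩ := (hlim.eventually_lt_const hε).exists
  refine ⟨n, (hφ x z _ _ (by positivity)
    (div_le_self hd.le (one_le_pow₀ one_le_two)) le_rfl).trans_lt ?_⟩
  rwa [div_div_cancel_left' hd.ne', ← inv_pow, ← one_div]

namespace IsDeformation

variable (he : IsDeformation φ A' e)
include he

lemma exists_radius (hφ : Gauge φ A) (hrev : ReverseDoubling φ) (hA' : 0 < A') {x z : Z} {r : ℝ}
    (hr : 0 < r) (hz : r / 4 ≤ dist (e x) (e z)) :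
    ∃ R > 0, A' * φ x R < r ∧ r ≤ 4 * A * A' * φ x R := by
  have hne : x ≠ z := ne_of_apply_ne e (dist_pos.1 ((by positivity : 0 < r / 4).trans_le hz))
  have hd : 0 < dist x z := dist_pos.2 hne
  have hA := hφ.one_le
  have hex : ∃ n : ℕ, A' * φ x (dist x z / 2 ^ n) < r := by
    obtain ⟨n, hn⟩ := hrev.exists_lt hne (div_pos hr hA')
    exact ⟨n, (lt_div_iff₀' hA').1 hn⟩
  classical
  refine ⟨dist x z / 2 ^ Nat.find hex, by positivity, Nat.find_spec hex, ?_⟩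
  rcases hn : Nat.find hex with _ | n
  · have := mul_pos hA' (hφ.pos x _ hd)
    rw [pow_zero, div_one]
    nlinarith [he.dist_le x z hne]
  · have hmin : r ≤ A' * φ x (dist x z / 2 ^ n) := not_lt.1 (Nat.find_min hex (by omega))
    have hhalf : φ x (dist x z / 2 ^ n) ≤ A * 2 * φ x (dist x z / 2 ^ (n + 1)) := by
      convert hφ.le_mul x x (dist x z / 2 ^ (n + 1)) (dist x z / 2 ^ n) (by positivity) ?_ ?_
        using 3
      · rw [pow_succ]
        field_simp
      · gcongr
        · exact one_le_two
        · exact n.le_succ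
      · rw [dist_self]
        positivity
    have hpos := hφ.pos x (dist x z / 2 ^ (n + 1)) (by positivity)
    calc r ≤ A' * φ x (dist x z / 2 ^ n) := hmin
      _ ≤ A' * (A * 2 * φ x (dist x z / 2 ^ (n + 1))) := by gcongr
      _ = 2 * A * A' * φ x (dist x z / 2 ^ (n + 1)) := by ring
      _ ≤ 4 * A * A' * φ x (dist x z / 2 ^ (n + 1)) := by gcongr; norm_num

lemma ball_subset_preimage_ball (hφ : Gauge φ A) (hA' : 0 ≤ A') {x : Z} {R r : ℝ} (hr : 0 < r)
    (hR : A' * φ x R < r) : Metric.ball x R ⊆ e ⁻¹' Metric.ball (e x) r := by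
  intro y hy
  rw [mem_preimage, Metric.mem_ball']
  rcases eq_or_ne x y with rfl | hxy
  · rwa [dist_self]
  calc dist (e x) (e y) ≤ A' * φ x (dist x y) := he.dist_le x y hxy
    _ ≤ A' * φ x R := by gcongr; exact hφ.mono x (Metric.mem_ball'.1 hy).le
    _ < r := hR

lemma apply_max_dist_lt {x y : Z} {R r : ℝ} (hR : φ x R < r) (hR0 : 0 ≤ R)
    (hy : dist (e x) (e y) < r) : φ x (max (dist x y) R) < r := by
  rcases le_or_gt (dist x y) R with hle | hlt
  · rwa [max_eq_right hle]
  · rw [max_eq_left hlt.le]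
    exact (he.le_dist x y (dist_pos.1 (hR0.trans_lt hlt))).trans_lt hy

lemma exists_lt_of_ofReal_le_ediam {M r : ℝ} (hr : 0 < r) (hMr : M < r)
    (hrW : ENNReal.ofReal r ≤ Metric.ediam (univ : Set W)) : ∃ z R, M < φ z R := by
  by_contra! hle
  refine hrW.not_gt (lt_of_le_of_lt (Metric.ediam_le (d := ENNReal.ofReal M) ?_)
    ((ENNReal.ofReal_lt_ofReal_iff hr).2 hMr))
  intro y _ z _
  obtain ⟨y, rfl⟩ := e.surjective y
  obtain ⟨z, rfl⟩ := e.surjective z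
  rw [edist_dist]
  exact ENNReal.ofReal_le_ofReal (he.dist_le_of_forall_le M hle y z)

end IsDeformation

namespace MassProfile

variable [MeasurableSpace Z] {μ : Measure Z} {β C q : ℝ} {m : Z → ℝ → ℝ}
  (h : MassProfile μ β C q m)
include h

lemma measure_preimage_ball_le (hβ : 0 < β) (he : IsDeformation (fun x R => m x R ^ β⁻¹) A' e)
    {x : Z} {R r : ℝ} (hr : 0 < r) (hR0 : 0 < R) (hR : m x R ^ β⁻¹ < r)
    (hrW : ENNReal.ofReal r ≤ Metric.ediam (univ : Set W)) :
    μ (e ⁻¹' Metric.ball (e x) r) ≤ ENNReal.ofReal (C * r ^ β) := by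
  have hC : 0 ≤ C := zero_le_one.trans h.one_le
  refine measure_le_of_forall_exists_ball (x := x) fun y hy => ?_
  set d := max (dist x y) R
  have hd : m x d ^ β⁻¹ < r := he.apply_max_dist_lt hR hR0.le (Metric.mem_ball'.1 hy)
  obtain ⟨R', hdR', hR'⟩ | hmax := h.measure_le_or_max x d (hR0.trans_le (le_max_right _ _))
  · refine ⟨R', by rw [dist_comm]; exact (le_max_left _ _).trans_lt hdR', hR'.trans ?_⟩
    gcongr
    exact ((Real.rpow_inv_lt_iff_of_pos (h.nonneg x d) hr.le hβ).1 hd).le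
  · obtain ⟨z, S, hzS⟩ := he.exists_lt_of_ofReal_le_ediam hr hd hrW
    exact absurd hzS
      (Real.rpow_le_rpow (h.nonneg z S) (hmax z S) (inv_nonneg.2 hβ.le)).not_gt

lemma le_measure_preimage_ball (hβ : 0 < β) (hA' : 0 ≤ A')
    (he : IsDeformation (fun x R => m x R ^ β⁻¹) A' e) {x : Z} {R r : ℝ} (hr : 0 < r)
    (hR0 : 0 < R) (hR : A' * m x R ^ β⁻¹ < r) :
    ENNReal.ofReal (C⁻¹ * m x R) ≤ μ (e ⁻¹' Metric.ball (e x) r) := by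
  have hC : 0 < C := one_pos.trans_le h.one_le
  calc ENNReal.ofReal (C⁻¹ * m x R) = (ENNReal.ofReal C)⁻¹ * ENNReal.ofReal (m x R) := by
        rw [ENNReal.ofReal_mul (by positivity), ENNReal.ofReal_inv_of_pos hC]
    _ ≤ μ (Metric.ball x R) := by
        rw [ENNReal.inv_mul_le_iff (by simpa) (by simp)]
        exact h.le_mul_measure x R hR0
    _ ≤ _ := measure_mono (he.ball_subset_preimage_ball (h.gauge hβ) hA' hr hR)

end MassProfile

lemma MassProfile.ahlforsRegular {W : Type u} [MetricSpace W] {e : Z ≃ W} [MeasurableSpace Z]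
    [BorelSpace Z] [CompleteSpace Z] [Nontrivial Z] {μ : Measure Z} {β C q : ℝ}
    {m : Z → ℝ → ℝ} (h : MassProfile μ β C q m) (hβ : 0 < β) (hA' : 1 ≤ A')
    (he : IsDeformation (fun x R => m x R ^ β⁻¹) A' e)
    (hrev : ReverseDoubling fun x R => m x R ^ β⁻¹) (hqs : IsQuasisymmetric e) :
    AhlforsRegular W β := by
  have hW := hqs.controlsRatios.completeSpace
  let _ : MeasurableSpace W := borel W
  have hborel : BorelSpace W := ⟨rfl⟩
  have hmeas : Measurable e := hqs.controlsRatios.continuous.measurable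
  have hφ := h.gauge hβ
  have hC := h.one_le
  have hA := hφ.one_le
  set B := 4 * C ^ β⁻¹ * A'
  have hB : 1 ≤ B := by nlinarith
  refine ⟨hW, _, hborel, μ.map e, C * B ^ β, one_le_mul_of_one_le_of_one_le hC
    (Real.one_le_rpow hB hβ.le), fun w r hr hrW => ?_⟩
  obtain ⟨x, rfl⟩ := e.surjective w
  obtain ⟨w, hw⟩ := exists_div_four_le_dist hr hrW (e x)
  obtain ⟨z, rfl⟩ := e.surjective w
  obtain ⟨R, hR, hlt, hle⟩ := he.exists_radius hφ hrev (one_pos.trans_le hA') hr hw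
  have hm := h.nonneg x R
  have hrm : r ^ β ≤ B ^ β * m x R := by
    calc r ^ β ≤ (B * m x R ^ β⁻¹) ^ β := by gcongr
      _ = B ^ β * m x R := by
        rw [Real.mul_rpow (by positivity) (by positivity), Real.rpow_inv_rpow hm hβ.ne']
  rw [Measure.map_apply hmeas Metric.isOpen_ball.measurableSet]
  constructor
  · refine le_trans (ENNReal.ofReal_le_ofReal ?_)
      (h.le_measure_preimage_ball hβ (by positivity) he hr hR hlt)
    rw [mul_inv, mul_assoc]
    gcongr
    rwa [inv_mul_le_iff₀ (by positivity)]
  · refine (h.measure_preimage_ball_le hβ he hr hR (lt_of_le_of_lt ?_ hlt) hrW).trans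
      (ENNReal.ofReal_le_ofReal ?_)
    · exact le_mul_of_one_le_left (by positivity) hA'
    · rw [mul_assoc]
      gcongr
      exact le_mul_of_one_le_left (by positivity) (Real.one_le_rpow hB hβ.le)

end Regularity

/-! ### Conformal dimension -/

section ConformalDimension

lemma exists_ahlforsRegular_of_packingBound {Z : Type u} [MetricSpace Z] [CompleteSpace Z]
    [Nontrivial Z] {L β : ℝ} {N : ℕ} (hL : 100 ≤ L) (hβ : 0 < β) (hN : N ≤ L ^ β)
    (hpack : ∀ a b : Z, PackingBound Z L N (dist a b / 8)) (hup : UniformlyPerfect Z) :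
    ∃ (W : Type u) (_ : MetricSpace W) (e : Z ≃ W), AhlforsRegular W β ∧ IsQuasisymmetric e := by
  let _ : MeasurableSpace Z := borel Z
  have hborel : BorelSpace Z := ⟨rfl⟩
  obtain ⟨μ, C, q, m, hm⟩ := PackingBound.exists_massProfile hL hβ hN hpack
  have hφ := hm.gauge hβ
  have hrev := (hm.reverseDoubling hup).rpow hm.nonneg (inv_pos.2 hβ)
  obtain ⟨W, _, e, he⟩ := hφ.exists_isDeformation
  have hA : 1 ≤ (C ^ β⁻¹) ^ 2 := one_le_pow₀ hφ.one_le
  have hqs := he.isQuasisymmetric (one_pos.trans_le hA) hφ hrev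
  exact ⟨W, _, e, hm.ahlforsRegular hβ hA he hrev hqs, hqs⟩

lemma IsQuasisymmetric.mem_confdimSet {Z W : Type u} [MetricSpace Z] [MetricSpace W]
    [Nontrivial Z] {e : Z ≃ W} (he : IsQuasisymmetric e) {Q : ℝ} (hQ : 0 ≤ Q)
    (hW : AhlforsRegular W Q) : Q ∈ confdimSet Z := by
  have : Nontrivial W := e.symm.nontrivial
  have hc := he.controlsRatios
  exact ⟨hQ, W, _, ⟨e, hc.continuous, hc.symm.continuous⟩, hW, he⟩

lemma zero_mem_confdimSet_of_subsingleton (Z : Type u) [MetricSpace Z] [Subsingleton Z] :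
    0 ∈ confdimSet Z := by
  let _ : MeasurableSpace Z := borel Z
  refine ⟨le_rfl, Z, _, Homeomorph.refl Z, ⟨inferInstance, _, ⟨rfl⟩, 0, 1, le_rfl, ?_⟩,
    Homeomorph.refl _, fun x y z t h => h⟩
  intro w r hr hrZ
  replace hrZ : ENNReal.ofReal r ≤ Metric.ediam (univ : Set Z) := hrZ
  rw [Metric.ediam_subsingleton subsingleton_univ, nonpos_iff_eq_zero, ENNReal.ofReal_eq_zero]
    at hrZ
  exact absurd hrZ hr.not_ge

variable {X W : Type u} [MetricSpace X] [MetricSpace W]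

lemma exists_mem_confdimSet_lt_of_relativelyPorous {Q : ℝ} (hQ : 0 < Q) (hW : AhlforsRegular W Q)
    {Z : Set W} [Nontrivial Z] [CompleteSpace Z] (hZ : RelativelyPorous Z)
    (hup : UniformlyPerfect Z) {Y : Type u} [MetricSpace Y] {e : Y ≃ Z} (he : IsQuasisymmetric e) :
    ∃ β ∈ confdimSet Y, β < Q := by
  have : Nontrivial Y := e.nontrivial
  obtain ⟨β, L, N, hβ, hβQ, hL, hN, hpack⟩ := hZ.exists_packingBound hQ hW
  obtain ⟨V, _, g, hV, hg⟩ := exists_ahlforsRegular_of_packingBound hL hβ hN hpack hup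
  exact ⟨β, IsQuasisymmetric.mem_confdimSet (e := e.trans g) (hg.comp he) hβ.le hV, hβQ⟩

lemma Porous.exists_mem_confdimSet_lt {Y : Set X} (hY : Porous Y) (hfin : (confdimSet Y).Nonempty)
    {f : X ≃ W} (hf : IsQuasisymmetric f) {Q : ℝ} (hQ : 0 < Q) (hW : AhlforsRegular W Q) :
    ∃ β ∈ confdimSet Y, β < Q := by
  rcases subsingleton_or_nontrivial Y with hsub | hnontriv
  · exact ⟨0, zero_mem_confdimSet_of_subsingleton Y, hQ⟩
  obtain ⟨S, hS⟩ := hfin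
  rcases hS.1.eq_or_lt with rfl | hS0
  · exact ⟨0, hS, hQ⟩
  obtain ⟨-, V, _, g, hV, hg⟩ := hS
  have hfY : IsQuasisymmetric (f.image Y) := hf.imp fun η hη x y z t h => hη x y z t h
  have hVZ : ControlsRatios (g.toEquiv.symm.trans (f.image Y)) :=
    hfY.controlsRatios.comp (ControlsRatios.symm (e := g.toEquiv) hg.controlsRatios)
  have : Nontrivial V := g.toEquiv.symm.nontrivial
  have : Nontrivial (f '' Y) := (f.image Y).symm.nontrivial
  have : CompleteSpace V := hV.1
  have : CompleteSpace (f '' Y) := hVZ.completeSpace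
  have hup : UniformlyPerfect (f '' Y) := (hV.uniformlyPerfect hS0).of_controlsRatios hVZ
  exact exists_mem_confdimSet_lt_of_relativelyPorous hQ hW
    (hY.relativelyPorous.image hf.controlsRatios hup) hup hfY

end ConformalDimension

/-- If `X` is a nonempty metric space, `Y ⊆ X` is a nonempty porous subset (with the induced
metric), the conformal dimensions of `Y` and `X` are equal, finite (i.e. the defining sets of
exponents are nonempty) and positive, then the conformal dimension of `X` is not attained:
there is no Ahlfors `Q`-regular space `W` with `Q = confdim X` quasisymmetric to `X`. -/
theorem confdim_not_attained_of_porous {X : Type u} [MetricSpace X] [Nonempty X]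
    (Y : Set X) (hYne : Y.Nonempty) (hYpor : Porous Y)
    (hfinX : (confdimSet X).Nonempty) (hfinY : (confdimSet (↥Y)).Nonempty)
    (heq : confdim (↥Y) = confdim X) (hpos : 0 < confdim X) :
    ¬ ∃ (W : Type u) (_ : MetricSpace W) (f : X ≃ₜ W),
        AhlforsRegular W (confdim X) ∧ IsQuasisymmetric (f : X → W) := by
  rintro ⟨W, _, f, hW, hf⟩
  obtain ⟨β, hβ, hlt⟩ := hYpor.exists_mem_confdimSet_lt hfinY (f := f.toEquiv) hf hpos hW
  have hle : confdim Y ≤ β := csInf_le ⟨0, fun _ h => h.1⟩ hβ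
  exact (hle.trans_lt hlt).ne heq
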